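/- Let m be a positive integer. For τ in the upper half-plane and z1, z3 ∈ ℂ such that all denominators occurring are nonzero (i.e., none of z1, z1+1/2, z3, z3+1/2 lies in ℤ + ℤτ), the following identity holds: θ_{0,m+1}(τ, (−1/2 + m(z1+z3))/(m+1)) · { Φ^{[m,0]}(τ, z1, −z3, 0) − Φ^{[m,0]}(τ, z1+1/2, −z3−1/2, 0) } = 2i η(τ)² η(2τ)² { −θ_{0,m+1}(τ, (1/2+z1+z3)/(m+1) + z1−z3) / (ϑ_{11}(τ,z1) ϑ_{10}(τ,z1)) + θ_{0,m+1}(τ, (1/2+z1+z3)/(m+1) − z1+z3) / (ϑ_{11}(τ,z3) ϑ_{10}(τ,z3)) } + 2 Σ_{j=1}^∞ Σ_{r=1}^{j} Σ_{k odd, 1≤k≤m−1} (−1)^j q^{(m+1)j² − (2m(j−r)+k)²/(4m)} { e^{πi(2mr−k)(z1+z3)} + e^{−πi(2mr−k)(z1+z3)} } [θ_{k,m} − θ_{−k,m}](τ, z1−z3) − 2 Σ_{j=1}^∞ Σ_{r=0}^{j−1} Σ_{k odd, 1≤k≤m−1} (−1)^j q^{(m+1)j² − (2m(j−r)−k)²/(4m)}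 { e^{πi(2mr+k)(z1+z3)} + e^{−πi(2mr+k)(z1+z3)} } [θ_{k,m} − θ_{−k,m}](τ, z1−z3). -/

import Mathlib

open Complex

noncomputable section

namespace Wakimoto

/-- `qpow τ x = e^{2πiτx}`, i.e. `q^x` where `q = e^{2πiτ}`. -/
def qpow (τ x : ℂ) : ℂ := Complex.exp (2 * Real.pi * Complex.I * τ * x)

/-- `e2 z = e^{2πiz}`. -/
def e2 (z : ℂ) : ℂ := Complex.exp (2 * Real.pi * Complex.I * z)

/-- The mock theta function `Φ^{[m,s]}_1`. -/
def Phi1 (m s : ℂ) (τ z1 z2 t : ℂ) : ℂ :=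
  Complex.exp (-(2 * Real.pi * Complex.I) * m * t) *
    ∑' j : ℤ,
      Complex.exp (2 * Real.pi * Complex.I * (m * (j : ℂ) * (z1 + z2) + s * z1)) *
          qpow τ (m * (j : ℂ) ^ 2 + s * (j : ℂ)) /
        (1 - e2 z1 * qpow τ (j : ℂ))

/-- The mock theta function `Φ^{[m,s]}_2`. -/
def Phi2 (m s : ℂ) (τ z1 z2 t : ℂ) : ℂ :=
  Complex.exp (-(2 * Real.pi * Complex.I) * m * t) *
    ∑' j : ℤ,
      Complex.exp (-(2 * Real.pi * Complex.I) * (m * (j : ℂ) * (z1 + z2) + s * z2)) *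
          qpow τ (m * (j : ℂ) ^ 2 + s * (j : ℂ)) /
        (1 - e2 (-z2) * qpow τ (j : ℂ))

/-- `Φ^{[m,s]} = Φ^{[m,s]}_1 - Φ^{[m,s]}_2`. -/
def Phi (m s : ℂ) (τ z1 z2 t : ℂ) : ℂ :=
  Phi1 m s τ z1 z2 t - Phi2 m s τ z1 z2 t

/-- Jacobi's theta function `θ_{k,m}`. -/
def jTheta (k m : ℂ) (τ z : ℂ) : ℂ :=
  ∑' j : ℤ,
    Complex.exp (2 * Real.pi * Complex.I * (m * ((j : ℂ) + k / (2 * m)) * z)) *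
      qpow τ (m * ((j : ℂ) + k / (2 * m)) ^ 2)

/-- The signed theta function `θ^{(-)}_{k,m}`. -/
def jThetaM (k m : ℂ) (τ z : ℂ) : ℂ :=
  ∑' j : ℤ,
    (-1 : ℂ) ^ j *
      Complex.exp (2 * Real.pi * Complex.I * (m * ((j : ℂ) + k / (2 * m)) * z)) *
      qpow τ (m * ((j : ℂ) + k / (2 * m)) ^ 2)

/-- The Dedekind eta function. -/
def eta (τ : ℂ) : ℂ := qpow τ (1 / 24) * ∏' n : ℕ, (1 - qpow τ ((n : ℂ) + 1))

/-- The Mumford theta functions `ϑ_{ab}`. -/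
def mumford (a b : ℕ) (τ z : ℂ) : ℂ :=
  ∑' n : ℤ,
    Complex.exp (Real.pi * Complex.I * τ * ((n : ℂ) + (a : ℂ) / 2) ^ 2 +
      2 * Real.pi * Complex.I * ((n : ℂ) + (a : ℂ) / 2) * (z + (b : ℂ) / 2))

/-- `z` lies in the lattice `ℤ + ℤτ`. -/
def InLattice (τ z : ℂ) : Prop := ∃ a b : ℤ, z = (a : ℂ) + (b : ℂ) * τ

/-- finite q-Pochhammer `(1-q)...(1-q^n)`. -/
def poch (q : ℂ) (n : ℕ) : ℂ := ∏ k ∈ Finset.range n, (1 - q ^ (k + 1))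

def tri (j : ℤ) : ℤ := j * (j + 1) / 2

lemma two_tri (j : ℤ) : 2 * tri j = j * (j + 1) := by
  unfold tri
  exact Int.two_mul_ediv_two_of_even (Int.even_mul_succ_self j)

lemma two_choose (k : ℕ) : 2 * ((k.choose 2 : ℕ) : ℤ) = k * (k - 1) := by
  induction k with
  | zero => simp
  | succ n ih =>
    have : (n+1).choose 2 = n + n.choose 2 := by
      rw [Nat.choose_succ_succ' n 1, Nat.choose_one_right]
    rw [this]; push_cast; linarith

lemma tri_choose (k N : ℕ) :
    tri ((k:ℤ) - N) = (k.choose 2 : ℕ) + (1 - (N:ℤ)) * k + (N.choose 2 : ℕ) := by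
  have h1 := two_tri ((k:ℤ) - N)
  have h2 := two_choose k
  have h3 := two_choose N
  have : 2 * tri ((k:ℤ) - N) = 2 * (((k.choose 2 : ℕ):ℤ) + (1 - (N:ℤ)) * k + (N.choose 2 : ℕ)) := by
    linear_combination h1 - h2 - h3
  linarith

def gauss (q : ℂ) : ℕ → ℕ → ℂ
  | _, 0 => 1
  | 0, _ + 1 => 0
  | M + 1, k + 1 => gauss q M (k + 1) + q ^ (M - k) * gauss q M k

lemma gauss_zero (q : ℂ) (M : ℕ) : gauss q M 0 = 1 := by cases M <;> rfl

lemma gauss_eq_zero (q : ℂ) (M k : ℕ) (h : M < k) : gauss q M k = 0 := by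
  induction M generalizing k with
  | zero => obtain ⟨k, rfl⟩ := Nat.exists_eq_add_of_lt h; simp [gauss]
  | succ M ih =>
    obtain ⟨k, rfl⟩ : ∃ k', k = k' + 1 := ⟨k - 1, by omega⟩
    rw [gauss, ih _ (by omega), ih _ (by omega)]; simp

lemma gauss_self (q : ℂ) (M : ℕ) : gauss q M M = 1 := by
  induction M with
  | zero => rfl
  | succ M ih => rw [gauss, gauss_eq_zero _ _ _ (Nat.lt_succ_self M), ih]; simp

lemma poch_succ (q : ℂ) (n : ℕ) : poch q (n+1) = poch q n * (1 - q^(n+1)) := by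
  rw [poch, Finset.prod_range_succ]; rfl

lemma poch_zero (q : ℂ) : poch q 0 = 1 := by simp [poch]

lemma gauss_poch (q : ℂ) (k l : ℕ) :
    poch q k * poch q l * gauss q (k + l) k = poch q (k + l) := by
  induction k generalizing l with
  | zero => simp [gauss_zero, poch_zero]
  | succ k ihk =>
    induction l with
    | zero => simp [gauss_self, poch_zero]
    | succ l ihl =>
      have e1 : k + 1 + (l + 1) = (k + 1 + l) + 1 := by ring
      have e2 : k + 1 + l = k + (l+1) := by ring
      have h2 := ihk (l+1)
      rw [e1, gauss, poch_succ q (k+1+l), ← ihl]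
      rw [show k + 1 + l - k = l + 1 by omega]
      rw [← e2] at h2
      rw [← ihl] at h2
      rw [poch_succ q k, poch_succ q l] at *
      linear_combination q^(l+1) * (1 - q^(k+1)) * h2

lemma rothe (q y : ℂ) (M : ℕ) :
    ∏ k ∈ Finset.range M, (1 + y * q ^ k) =
      ∑ k ∈ Finset.range (M + 1), q ^ (k.choose 2) * gauss q M k * y ^ k := by
  induction M with
  | zero => simp [gauss]
  | succ M ih =>
    rw [Finset.prod_range_succ, ih, Finset.sum_range_succ' _ (M+1)]
    have hs : ∑ k ∈ Finset.range (M + 1), q ^ ((k+1).choose 2) * gauss q (M+1) (k+1) * y ^ (k+1)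
      = ∑ k ∈ Finset.range (M + 1), q ^ ((k+1).choose 2) * gauss q M (k+1) * y ^ (k+1)
        + (∑ k ∈ Finset.range (M + 1), q ^ (k.choose 2) * gauss q M k * y ^ k) * (y * q ^ M) := by
      rw [Finset.sum_mul, ← Finset.sum_add_distrib]
      refine Finset.sum_congr rfl fun k hk => ?_
      have hk' : k ≤ M := by simpa [Nat.lt_succ_iff] using hk
      have : (k+1).choose 2 = k + k.choose 2 := by
        rw [Nat.choose_succ_succ' k 1, Nat.choose_one_right]
      obtain ⟨c, rfl⟩ := Nat.exists_eq_add_of_le hk'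
      rw [gauss, this, show k + c - k = c by omega]
      ring
    rw [hs]
    have h0 : ∑ k ∈ Finset.range (M + 1), q ^ (k.choose 2) * gauss q M k * y ^ k =
        ∑ k ∈ Finset.range (M + 1), q ^ ((k+1).choose 2) * gauss q M (k+1) * y ^ (k+1) + 1 := by
      have := Finset.sum_range_succ' (fun k => q ^ (k.choose 2) * gauss q M k * y ^ k) (M+1)
      rw [Finset.sum_range_succ, gauss_eq_zero q M (M+1) (Nat.lt_succ_self M)] at this
      simpa [gauss_zero] using this
    simp only [Nat.choose_zero_succ, pow_zero, gauss_zero, mul_one]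
    linear_combination h0

lemma poch_ne_zero {q : ℂ} (hq : ‖q‖ < 1) (n : ℕ) : poch q n ≠ 0 := by
  rw [poch, Finset.prod_ne_zero_iff]
  intro k _ h
  have h1 : q^(k+1) = 1 := by linear_combination -h
  have h2 : ‖q‖^(k+1) = 1 := by rw [← norm_pow, h1, norm_one]
  have h3 := pow_lt_one₀ (norm_nonneg q) hq (Nat.succ_ne_zero k)
  simp only [Nat.succ_eq_add_one] at h3
  linarith

/-- infinite product `∏ (1 - x q^(n+1))`. -/
def pinf (q x : ℂ) : ℂ := ∏' n : ℕ, (1 - x * q ^ (n + 1))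

lemma summable_aux {q : ℂ} (hq : ‖q‖ < 1) (x : ℂ) : Summable fun n : ℕ => ‖-(x * q ^ (n + 1))‖ := by
  simp only [norm_neg, norm_mul, norm_pow]
  exact ((summable_nat_add_iff 1).2 (summable_geometric_of_lt_one (norm_nonneg q) hq)).mul_left _

lemma multipliable_pinf {q : ℂ} (hq : ‖q‖ < 1) (x : ℂ) :
    Multipliable fun n : ℕ => (1 - x * q ^ (n + 1)) := by
  simpa [sub_eq_add_neg] using multipliable_one_add_of_summable (summable_aux hq x)

lemma tendsto_pinf {q : ℂ} (hq : ‖q‖ < 1) (x : ℂ) :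
    Filter.Tendsto (fun N => ∏ n ∈ Finset.range N, (1 - x * q ^ (n + 1))) Filter.atTop
      (nhds (pinf q x)) := (multipliable_pinf hq x).hasProd.tendsto_prod_nat

lemma pinf_ne_zero {q : ℂ} (hq : ‖q‖ < 1) (x : ℂ) (h : ∀ n : ℕ, x * q ^ (n+1) ≠ 1) :
    pinf q x ≠ 0 := by
  have := tprod_one_add_ne_zero_of_summable (f := fun n : ℕ => -(x * q ^ (n + 1)))
    (fun i hi => h i (by linear_combination -hi)) (summable_aux hq x)
  simpa [sub_eq_add_neg, pinf] using this

lemma tendsto_poch {q : ℂ} (hq : ‖q‖ < 1) :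
    Filter.Tendsto (poch q) Filter.atTop (nhds (pinf q 1)) := by
  have := tendsto_pinf hq 1
  simp only [one_mul] at this
  exact this

lemma pinf_one_ne_zero {q : ℂ} (hq : ‖q‖ < 1) : pinf q 1 ≠ 0 := by
  apply pinf_ne_zero hq
  intro n h
  have := poch_ne_zero hq (n+1)
  rw [poch_succ] at this
  apply this
  rw [one_mul] at h
  rw [h]; simp

/-- Tannery-type limit. -/
lemma tannery {q : ℂ} (hq : ‖q‖ < 1) (h : ℤ → ℂ) (hh : Summable fun j => ‖h j‖) :
    Filter.Tendsto (fun N : ℕ => ∑ i ∈ Finset.range (2 * N + 1),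
      h ((i:ℤ) - N) / (poch q i * poch q (2 * N - i))) Filter.atTop
      (nhds ((∑' j, h j) / (pinf q 1 * pinf q 1))) := by
  have hinv : Filter.Tendsto (fun n => (poch q n)⁻¹) Filter.atTop (nhds (pinf q 1)⁻¹) :=
    (tendsto_poch hq).inv₀ (pinf_one_ne_zero hq)
  obtain ⟨C, hC⟩ := hinv.norm.bddAbove_range
  have hC' : ∀ n, ‖(poch q n)⁻¹‖ ≤ C := fun n => hC ⟨n, rfl⟩
  have hC0 : 0 ≤ C := (norm_nonneg _).trans (hC' 0)
  let f : ℕ → ℤ → ℂ := fun N j => if j ∈ Finset.Icc (-(N:ℤ)) N then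
    h j * ((poch q (N + j).toNat)⁻¹ * (poch q (N - j).toNat)⁻¹) else 0
  have key : Filter.Tendsto (fun N => ∑' j, f N j) Filter.atTop
      (nhds (∑' j, h j * ((pinf q 1)⁻¹ * (pinf q 1)⁻¹))) := by
    refine tendsto_tsum_of_dominated_convergence (bound := fun j => ‖h j‖ * (C * C))
      (hh.mul_right _) ?_ ?_
    · intro j
      have e : (fun N : ℕ => h j * ((poch q ((N:ℤ) + j).toNat)⁻¹ * (poch q ((N:ℤ) - j).toNat)⁻¹))
          =ᶠ[Filter.atTop] fun N => f N j := by
        filter_upwards [Filter.eventually_ge_atTop j.natAbs] with N hN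
        have : j ∈ Finset.Icc (-(N:ℤ)) N := by rw [Finset.mem_Icc]; omega
        simp only [f, if_pos this]
      refine Filter.Tendsto.congr' e ?_
      refine Filter.Tendsto.const_mul _ (Filter.Tendsto.mul ?_ ?_)
      · refine hinv.comp (Filter.tendsto_atTop.2 fun b => ?_)
        filter_upwards [Filter.eventually_ge_atTop (b + j.natAbs)] with N hN
        omega
      · refine hinv.comp (Filter.tendsto_atTop.2 fun b => ?_)
        filter_upwards [Filter.eventually_ge_atTop (b + j.natAbs)] with N hN
        omega
    · refine Filter.Eventually.of_forall fun N j => ?_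
      simp only [f]
      split_ifs
      · rw [norm_mul, norm_mul]
        gcongr
        · exact hC' _
        · exact hC' _
      · simp only [norm_zero]; positivity
  rw [tsum_mul_right] at key
  rw [div_eq_mul_inv, mul_inv]
  refine key.congr fun N => ?_
  rw [tsum_eq_sum (s := Finset.Icc (-(N:ℤ)) N) (fun j hj => by simp only [f, if_neg hj])]
  symm
  refine Finset.sum_bij (fun i _ => (i:ℤ) - N) ?_ ?_ ?_ ?_
  · intro i hi
    rw [Finset.mem_range] at hi
    rw [Finset.mem_Icc]; omega
  · intro a _ b _ hab; omega
  · intro j hj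
    rw [Finset.mem_Icc] at hj
    exact ⟨(j + N).toNat, by rw [Finset.mem_range]; omega, by omega⟩
  · intro i hi
    have hi' := Finset.mem_range.1 hi
    have : (i:ℤ) - N ∈ Finset.Icc (-(N:ℤ)) N := by rw [Finset.mem_Icc]; omega
    simp only [f, if_pos this]
    rw [show ((N:ℤ) + ((i:ℤ) - N)).toNat = i by omega,
      show ((N:ℤ) - ((i:ℤ) - N)).toNat = 2 * N - i by omega, div_eq_mul_inv, mul_inv]

lemma summable_gauss1 {a : ℝ} (ha : 0 < a) (c : ℝ) :
    Summable fun n : ℤ => Real.exp (-a * (n:ℝ)^2 + c * |(n:ℝ)|) := by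
  have := summable_pow_mul_jacobiTheta₂_term_bound (c / (2 * Real.pi)) (T := a / Real.pi)
    (by positivity) 0
  refine this.congr fun n => ?_
  have hp := Real.pi_ne_zero
  rw [pow_zero, one_mul]
  congr 1
  push_cast
  field_simp
  ring

lemma prod_pow_range (q : ℂ) (N : ℕ) : ∏ a ∈ Finset.range N, q ^ a = q ^ (N.choose 2) := by
  induction N with
  | zero => simp
  | succ n ih =>
    have : (n+1).choose 2 = n + n.choose 2 := by
      rw [Nat.choose_succ_succ' n 1, Nat.choose_one_right]
    rw [Finset.prod_range_succ, ih, this]; ring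

lemma jtp_fin {q x : ℂ} (hq : q ≠ 0) (hx : x ≠ 0) (N : ℕ) :
    (∏ k ∈ Finset.range N, (1 - x * q ^ (k+1))) * ∏ k ∈ Finset.range N, (1 - x⁻¹ * q ^ k) =
      ∑ i ∈ Finset.range (2 * N + 1),
        (-1 : ℂ) ^ ((i:ℤ) - N) * q ^ tri ((i:ℤ) - N) * x ^ ((i:ℤ) - N) * gauss q (2 * N) i := by
  have h := rothe q (-x * q ^ (1 - (N:ℤ))) (2 * N)
  rw [show Finset.range (2 * N) = Finset.range (N + N) by rw [two_mul],
    Finset.prod_range_add] at h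
  have e1 : ∏ k ∈ Finset.range N, (1 + -x * q ^ (1 - (N:ℤ)) * q ^ (N + k)) =
      ∏ k ∈ Finset.range N, (1 - x * q ^ (k+1)) := by
    refine Finset.prod_congr rfl fun k _ => ?_
    have : q ^ (1 - (N:ℤ)) * q ^ (N + k) = q ^ (k+1) := by
      rw [← zpow_natCast, ← zpow_natCast, ← zpow_add₀ hq]; congr 1; push_cast; ring
    rw [mul_assoc, this]; ring
  have e2 : ∏ k ∈ Finset.range N, (1 + -x * q ^ (1 - (N:ℤ)) * q ^ k) =
      (-x)^N * (q ^ (N.choose 2))⁻¹ * ∏ k ∈ Finset.range N, (1 - x⁻¹ * q ^ k) := by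
    rw [← Finset.prod_range_reflect, ← prod_pow_range, ← Finset.prod_inv_distrib,
      show (-x)^N = ∏ k ∈ Finset.range N, (-x) by simp,
      ← Finset.prod_mul_distrib, ← Finset.prod_mul_distrib]
    refine Finset.prod_congr rfl fun k hk => ?_
    rw [Finset.mem_range] at hk
    have : q ^ (1 - (N:ℤ)) * q ^ (N - 1 - k) = (q ^ k)⁻¹ := by
      rw [← zpow_natCast, ← zpow_natCast, ← zpow_add₀ hq, ← zpow_neg]; congr 1; omega
    rw [mul_assoc, this]
    have := pow_ne_zero k hq
    field_simp
    ring
  rw [e1, e2] at h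
  have hx' : (-x) ≠ 0 := neg_ne_zero.2 hx
  have hc : (-x)^N * (q ^ (N.choose 2))⁻¹ ≠ 0 :=
    mul_ne_zero (pow_ne_zero _ hx') (inv_ne_zero (pow_ne_zero _ hq))
  refine mul_left_cancel₀ hc ?_
  rw [mul_comm (∏ k ∈ Finset.range N, (1 - x * q ^ (k+1))), ← mul_assoc, h, Finset.mul_sum]
  refine Finset.sum_congr rfl fun i _ => ?_
  rw [mul_pow, tri_choose, ← zpow_natCast (q ^ (1 - (N:ℤ))), ← zpow_mul, zpow_add₀ hq, zpow_add₀ hq]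
  have : (-1 : ℂ) ^ ((i:ℤ) - N) * x ^ ((i:ℤ) - N) = (-x)^i * ((-x)^N)⁻¹ := by
    rw [← mul_zpow, neg_one_mul, zpow_sub₀ hx', zpow_natCast, zpow_natCast, div_eq_mul_inv]
  rw [zpow_natCast, zpow_natCast]
  have h3 := pow_ne_zero (N.choose 2) hq
  have h4 := pow_ne_zero N hx'
  calc _ = (-x)^i * ((-x)^N)⁻¹ * ((-x)^N * (q ^ (N.choose 2))⁻¹ *
      (q ^ (i.choose 2) * q ^ ((1 - (N:ℤ)) * i) * q ^ (N.choose 2) * gauss q (2*N) i)) := by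
        field_simp
    _ = _ := by rw [← this]; ring

lemma norm_term_le {q x : ℂ} (hq0 : q ≠ 0) (hx : x ≠ 0) (j : ℤ) :
    ‖(-1 : ℂ) ^ j * q ^ tri j * x ^ j‖ ≤
      Real.exp (-(-Real.log ‖q‖ / 2) * (j:ℝ)^2 + (|Real.log ‖q‖| / 2 + |Real.log ‖x‖|) * |(j:ℝ)|) := by
  have hq' := norm_pos_iff.2 hq0
  have hx' := norm_pos_iff.2 hx
  have h2 : (2:ℝ) * (tri j : ℝ) = j * (j+1) := by exact_mod_cast two_tri j
  have h2' : (tri j : ℝ) = j * (j+1) / 2 := by linarith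
  rw [norm_mul, norm_mul, norm_zpow, norm_zpow, norm_zpow, norm_neg, norm_one, one_zpow, one_mul,
    ← Real.rpow_intCast, ← Real.rpow_intCast, Real.rpow_def_of_pos hq', Real.rpow_def_of_pos hx',
    ← Real.exp_add]
  apply Real.exp_le_exp.2
  have h3 : Real.log ‖q‖ * j ≤ |Real.log ‖q‖| * |(j:ℝ)| := by
    rw [← abs_mul]; exact le_abs_self _
  have h4 : Real.log ‖x‖ * j ≤ |Real.log ‖x‖| * |(j:ℝ)| := by
    rw [← abs_mul]; exact le_abs_self _
  rw [h2']
  nlinarith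

lemma summable_jtp {q x : ℂ} (hq : ‖q‖ < 1) (hq0 : q ≠ 0) (hx : x ≠ 0) :
    Summable fun j : ℤ => ‖(-1 : ℂ) ^ j * q ^ tri j * x ^ j‖ := by
  have hl : 0 < -Real.log ‖q‖ / 2 := by
    have := Real.log_neg (norm_pos_iff.2 hq0) hq
    linarith
  exact Summable.of_nonneg_of_le (fun _ => norm_nonneg _) (norm_term_le hq0 hx)
    (summable_gauss1 hl _)

theorem jtp {q x : ℂ} (hq : ‖q‖ < 1) (hq0 : q ≠ 0) (hx : x ≠ 0) :
    ∑' j : ℤ, (-1 : ℂ) ^ j * q ^ tri j * x ^ j =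
      (1 - x⁻¹) * pinf q 1 * pinf q x * pinf q x⁻¹ := by
  have h1 := tannery hq _ (summable_jtp hq hq0 hx)
  have h2 := (((tendsto_poch hq).comp (Filter.tendsto_id.const_mul_atTop' (r := 2) two_pos))).mul h1
  have hp := pinf_one_ne_zero hq
  have h3 : Filter.Tendsto (fun N => (∏ k ∈ Finset.range N, (1 - x * q ^ (k+1))) *
      ∏ k ∈ Finset.range N, (1 - x⁻¹ * q ^ k)) Filter.atTop
      (nhds (pinf q x * ((1 - x⁻¹) * pinf q x⁻¹))) := by
    refine (tendsto_pinf hq x).mul ?_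
    rw [← Filter.tendsto_add_atTop_iff_nat 1]
    have := (tendsto_pinf hq x⁻¹).const_mul (1 - x⁻¹)
    refine this.congr fun N => ?_
    rw [Finset.prod_range_succ']
    simp [mul_comm]
  have h4 := tendsto_nhds_unique h3 (h2.congr fun N => ?_)
  · have h5 : (pinf q 1 * pinf q 1) ≠ 0 := mul_ne_zero hp hp
    rw [← mul_div_assoc, eq_div_iff h5] at h4
    apply mul_left_cancel₀ hp
    linear_combination -h4
  · rw [jtp_fin hq0 hx, Finset.mul_sum]
    refine Finset.sum_congr rfl fun i hi => ?_
    have hi' := Finset.mem_range.1 hi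
    have := gauss_poch q i (2 * N - i)
    rw [show i + (2 * N - i) = 2 * N by omega] at this
    have ha := poch_ne_zero hq i
    have hb := poch_ne_zero hq (2 * N - i)
    simp only [Function.comp, id]
    rw [← this]
    field_simp

lemma prod_erase_range (f : ℕ → ℂ) (i l : ℕ) :
    ∏ j ∈ (Finset.range (i + 1 + l)).erase i, f j =
      (∏ j ∈ Finset.range i, f j) * ∏ k ∈ Finset.range l, f (i + 1 + k) := by
  have : (Finset.range (i + 1 + l)).erase i =
      Finset.range i ∪ (Finset.range l).map (addLeftEmbedding (i+1)) := by
    ext a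
    simp only [Finset.mem_erase, Finset.mem_range, Finset.mem_union, Finset.mem_map,
      addLeftEmbedding_apply]
    constructor
    · rintro ⟨h1, h2⟩
      by_cases h : a < i
      · exact Or.inl h
      · exact Or.inr ⟨a - (i+1), by omega, by omega⟩
    · rintro (h | ⟨b, hb, rfl⟩) <;> omega
  rw [this, Finset.prod_union, Finset.prod_map]
  · rfl
  · rw [Finset.disjoint_left]
    intro a ha hb
    simp only [Finset.mem_range, Finset.mem_map, addLeftEmbedding_apply] at ha hb
    obtain ⟨b, _, rfl⟩ := hb
    omega

lemma prod_low (q : ℂ) (i : ℕ) :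
    ∏ j ∈ Finset.range i, (q ^ i - q ^ j) = (-1)^i * q ^ (i.choose 2) * poch q i := by
  rw [← prod_pow_range, poch, show (-1:ℂ)^i = ∏ k ∈ Finset.range i, (-1) by simp,
    ← Finset.prod_mul_distrib, ← Finset.prod_range_reflect (fun k => (1 - q ^ (k+1))),
    ← Finset.prod_mul_distrib]
  refine Finset.prod_congr rfl fun j hj => ?_
  have hj := Finset.mem_range.1 hj
  rw [show i - 1 - j + 1 = i - j by omega]
  obtain ⟨c, rfl⟩ := Nat.exists_eq_add_of_lt hj
  rw [show j + c + 1 - j = c + 1 by omega]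
  ring

lemma prod_high (q : ℂ) (i l : ℕ) :
    ∏ k ∈ Finset.range l, (q ^ i - q ^ (i + 1 + k)) = q ^ (i * l) * poch q l := by
  rw [pow_mul, poch, show (q^i)^l = ∏ k ∈ Finset.range l, (q^i) by simp,
    ← Finset.prod_mul_distrib]
  refine Finset.prod_congr rfl fun j _ => ?_
  ring

lemma pow_inj' {q : ℂ} (hq : ‖q‖ < 1) (hq0 : q ≠ 0) : Function.Injective fun i : ℕ => q ^ i := by
  intro a b h
  have h' : ‖q‖ ^ a = ‖q‖ ^ b := by
    rw [← norm_pow, ← norm_pow]; exact congrArg _ h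
  exact (pow_right_strictAnti₀ (norm_pos_iff.2 hq0) hq).injective h'

lemma S_fin {q x : ℂ} (hq : ‖q‖ < 1) (hq0 : q ≠ 0) (hx : x ≠ 0)
    (hxq : ∀ j : ℤ, x * q ^ j ≠ 1) (N : ℕ) :
    1 = ((∏ k ∈ Finset.range N, (1 - x⁻¹ * q ^ (k+1))) *
      ∏ k ∈ Finset.range (N+1), (1 - x * q ^ k)) *
      ∑ i ∈ Finset.range (2 * N + 1),
        (fun j : ℤ => (-1 : ℂ) ^ j * q ^ tri j / (1 - x * q ^ j)) ((i:ℤ) - N) /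
          (poch q i * poch q (2 * N - i)) := by
  set Y : ℂ := q ^ N * x⁻¹ with hY
  have hY0 : Y ≠ 0 := mul_ne_zero (pow_ne_zero _ hq0) (inv_ne_zero hx)
  have hfac : ∀ i : ℕ, Y - q ^ i = Y * (1 - x * q ^ ((i:ℤ) - N)) := by
    intro i
    have := pow_ne_zero N hq0
    rw [hY, zpow_sub₀ hq0, zpow_natCast, zpow_natCast]
    field_simp
  have hfac0 : ∀ i : ℕ, (1 - x * q ^ ((i:ℤ) - N)) ≠ 0 := fun i h =>
    hxq _ (by linear_combination -h)
  have hne : ∀ i ∈ Finset.range (2*N+1), Y ≠ q ^ i := by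
    intro i _ h
    have h1 := hfac i
    rw [h, sub_self] at h1
    exact mul_ne_zero (h ▸ hY0) (hfac0 i) h1.symm
  have hlag := Lagrange.eq_interpolate (s := Finset.range (2*N+1)) (v := fun i : ℕ => q ^ i)
    (f := (Polynomial.X : Polynomial ℂ)^N) ((pow_inj' hq hq0).injOn) (by
      rw [Polynomial.degree_X_pow, Finset.card_range]; exact_mod_cast (by omega))
  have hev := congrArg (Polynomial.eval Y) hlag
  rw [Lagrange.eval_interpolate_not_at_node _ hne, Lagrange.eval_nodal] at hev
  simp only [Polynomial.eval_pow, Polynomial.eval_X] at hev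
  have hprod : ∏ i ∈ Finset.range (2*N+1), (Y - q^i) = (-1)^N * q ^ (N.choose 2) * Y^(N+1) *
      ((∏ k ∈ Finset.range N, (1 - x⁻¹ * q ^ (k+1))) *
      ∏ k ∈ Finset.range (N+1), (1 - x * q ^ k)) := by
    rw [show 2*N+1 = N + (N+1) by ring, Finset.prod_range_add]
    have e1 : ∏ i ∈ Finset.range N, (Y - q^i) = (-1)^N * q ^ (N.choose 2) *
        ∏ k ∈ Finset.range N, (1 - x⁻¹ * q ^ (k+1)) := by
      rw [← prod_pow_range, show (-1:ℂ)^N = ∏ k ∈ Finset.range N, (-1) by simp,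
        ← Finset.prod_mul_distrib, ← Finset.prod_range_reflect (fun k => (1 - x⁻¹ * q ^ (k+1))),
        ← Finset.prod_mul_distrib]
      refine Finset.prod_congr rfl fun j hj => ?_
      have hj := Finset.mem_range.1 hj
      rw [show N - 1 - j + 1 = N - j by omega, hY]
      obtain ⟨c, hc⟩ := Nat.exists_eq_add_of_lt hj
      rw [hc, show j + c + 1 - j = c + 1 by omega]
      ring
    have e2 : ∏ k ∈ Finset.range (N+1), (Y - q^(N+k)) = Y^(N+1) *
        ∏ k ∈ Finset.range (N+1), (1 - x * q ^ k) := by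
      rw [show Y^(N+1) = ∏ k ∈ Finset.range (N+1), Y by simp, ← Finset.prod_mul_distrib]
      refine Finset.prod_congr rfl fun j _ => ?_
      rw [hfac (N+j)]
      push_cast
      rw [add_sub_cancel_left, zpow_natCast]
    rw [e1, e2]; ring
  rw [hprod] at hev
  refine mul_left_cancel₀ (pow_ne_zero N hY0) ?_
  rw [mul_one]
  refine hev.trans ?_
  rw [mul_comm ((-1)^N * q ^ (N.choose 2) * Y^(N+1)), mul_assoc, mul_left_comm (Y^N)]
  congr 1
  rw [Finset.mul_sum, Finset.mul_sum]
  refine Finset.sum_congr rfl fun i hi => ?_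
  have hi' := Finset.mem_range.1 hi
  have hw : Lagrange.nodalWeight (Finset.range (2*N+1)) (fun i : ℕ => q ^ i) i =
      ((-1)^i * q ^ (i.choose 2) * poch q i * (q ^ (i * (2*N-i)) * poch q (2*N-i)))⁻¹ := by
    rw [Lagrange.nodalWeight, Finset.prod_inv_distrib,
      show 2*N+1 = i + 1 + (2*N-i) by omega, prod_erase_range (fun j => q^i - q^j), prod_low, prod_high]
  rw [hw, hfac i]
  have ha := poch_ne_zero hq i
  have hb := poch_ne_zero hq (2*N-i)
  have hc := hfac0 i
  have hexp : q ^ (N.choose 2) * (q^i)^N = q ^ tri ((i:ℤ)-N) * (q ^ (i.choose 2) * q ^ (i * (2*N-i))) := by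
    rw [← zpow_natCast q (N.choose 2), ← pow_mul, ← zpow_natCast q (i*N),
      ← zpow_natCast q (i.choose 2), ← zpow_natCast q (i * (2*N-i)), ← zpow_add₀ hq0,
      ← zpow_add₀ hq0, ← zpow_add₀ hq0]
    congr 1
    rw [tri_choose]
    have := two_choose i
    push_cast [Nat.cast_sub (show i ≤ 2*N by omega)]
    linear_combination -this
  have hsgn : (-1:ℂ)^((i:ℤ)-N) * (-1)^i = (-1)^N := by
    rw [zpow_sub₀ (by norm_num), zpow_natCast, zpow_natCast]
    have h1 : (-1:ℂ)^i * (-1)^i = 1 := by rw [← mul_pow]; simp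
    have h2 : (-1:ℂ)^N * (-1)^N = 1 := by rw [← mul_pow]; simp
    have h3 : (-1:ℂ)^N ≠ 0 := pow_ne_zero _ (by norm_num)
    field_simp
    linear_combination h1 - h2
  have hs0 : (-1:ℂ)^i ≠ 0 := pow_ne_zero _ (by norm_num)
  have hq1 := pow_ne_zero (i.choose 2) hq0
  have hq2 := pow_ne_zero (i * (2*N-i)) hq0
  simp only []
  rw [← hsgn]
  rw [mul_inv, mul_inv, mul_inv, mul_inv, mul_inv]
  field_simp
  linear_combination (Y^(N+1)) * hexp


lemma inv_one_sub_bdd {q x : ℂ} (hq : ‖q‖ < 1) (hq0 : q ≠ 0) (hx : x ≠ 0) :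
    ∃ C : ℝ, 0 ≤ C ∧ ∀ j : ℤ, ‖(1 - x * q ^ j)⁻¹‖ ≤ C := by
  have hp : Filter.Tendsto (fun n : ℕ => q ^ n) Filter.atTop (nhds 0) :=
    tendsto_pow_atTop_nhds_zero_of_norm_lt_one hq
  have h1 : Filter.Tendsto (fun n : ℕ => (1 - x * q ^ n)⁻¹) Filter.atTop (nhds (1 - x * 0)⁻¹) :=
    ((hp.const_mul x).const_sub 1).inv₀ (by simp)
  have h2 : Filter.Tendsto (fun n : ℕ => q ^ n / (q ^ n - x)) Filter.atTop (nhds (0 / (0 - x))) :=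
    hp.div (hp.sub_const x) (by simpa using hx)
  obtain ⟨C1, hC1⟩ := h1.norm.bddAbove_range
  obtain ⟨C2, hC2⟩ := h2.norm.bddAbove_range
  refine ⟨max (max C1 C2) 0, le_max_right _ _, fun j => ?_⟩
  obtain ⟨n, rfl | rfl⟩ := j.eq_nat_or_neg
  · rw [zpow_natCast]
    exact (hC1 ⟨n, rfl⟩).trans ((le_max_left _ _).trans (le_max_left _ _))
  · have e : (1 - x * q ^ (-(n:ℤ)))⁻¹ = q ^ n / (q ^ n - x) := by
      rw [zpow_neg, zpow_natCast]
      have := pow_ne_zero n hq0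
      rw [← div_eq_mul_inv, one_sub_div this, inv_div]
    rw [e]
    exact (hC2 ⟨n, rfl⟩).trans ((le_max_right _ _).trans (le_max_left _ _))

theorem recip {q x : ℂ} (hq : ‖q‖ < 1) (hq0 : q ≠ 0) (hx : x ≠ 0)
    (hxq : ∀ j : ℤ, x * q ^ j ≠ 1) :
    pinf q 1 ^ 2 = (1 - x) * pinf q x * pinf q x⁻¹ *
      ∑' j : ℤ, (-1 : ℂ) ^ j * q ^ tri j / (1 - x * q ^ j) := by
  obtain ⟨C, hC0, hC⟩ := inv_one_sub_bdd hq hq0 hx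
  have hsum : Summable fun j : ℤ => ‖(-1 : ℂ) ^ j * q ^ tri j / (1 - x * q ^ j)‖ := by
    refine Summable.of_nonneg_of_le (fun _ => norm_nonneg _) (fun j => ?_)
      ((summable_jtp hq hq0 one_ne_zero).mul_right C)
    rw [div_eq_mul_inv, norm_mul, one_zpow, mul_one]
    exact mul_le_mul_of_nonneg_left (hC j) (norm_nonneg _)
  have h1 := tannery hq _ hsum
  have hp := pinf_one_ne_zero hq
  have h3 : Filter.Tendsto (fun N => (∏ k ∈ Finset.range N, (1 - x⁻¹ * q ^ (k+1))) *
      ∏ k ∈ Finset.range (N+1), (1 - x * q ^ k)) Filter.atTop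
      (nhds (pinf q x⁻¹ * ((1 - x) * pinf q x))) := by
    refine (tendsto_pinf hq x⁻¹).mul ?_
    have := (tendsto_pinf hq x).const_mul (1 - x)
    refine this.congr fun N => ?_
    rw [Finset.prod_range_succ']
    simp [mul_comm]
  have h4 := h3.mul h1
  have h5 := tendsto_nhds_unique (tendsto_const_nhds (x := (1:ℂ)))
    (h4.congr fun N => (S_fin hq hq0 hx hxq N).symm)
  have h6 : (pinf q 1 * pinf q 1) ≠ 0 := mul_ne_zero hp hp
  rw [← mul_div_assoc, eq_div_iff h6] at h5
  linear_combination h5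

lemma e2_add (a b : ℂ) : e2 (a + b) = e2 a * e2 b := by
  rw [e2, e2, e2, ← Complex.exp_add]; congr 1; ring

lemma e2_ne_zero (a : ℂ) : e2 a ≠ 0 := Complex.exp_ne_zero _

lemma e2_zero : e2 0 = 1 := by simp [e2]

lemma e2_neg (a : ℂ) : e2 (-a) = (e2 a)⁻¹ := by
  rw [e2, e2, ← Complex.exp_neg]; congr 1; ring

lemma e2_zpow (a : ℂ) (j : ℤ) : e2 a ^ j = e2 (j * a) := by
  rw [e2, e2, ← Complex.exp_int_mul]; congr 1; ring

lemma e2_pow (a : ℂ) (j : ℕ) : e2 a ^ j = e2 (j * a) := by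
  have := e2_zpow a j
  simpa using this

lemma e2_eq_one_iff (a : ℂ) : e2 a = 1 ↔ ∃ n : ℤ, a = n := by
  rw [e2, Complex.exp_eq_one_iff]
  have h : (2 * (Real.pi:ℂ) * Complex.I) ≠ 0 := Complex.two_pi_I_ne_zero
  refine exists_congr fun n => ⟨fun h1 => ?_, fun h1 => ?_⟩
  · apply mul_left_cancel₀ h; rw [h1]; ring
  · rw [h1]; ring

lemma e2_int (n : ℤ) : e2 n = 1 := (e2_eq_one_iff _).2 ⟨n, rfl⟩

lemma e2_half : e2 (1/2) = -1 := by
  rw [e2, show 2 * (Real.pi:ℂ) * Complex.I * (1/2) = Real.pi * Complex.I by ring, Complex.exp_pi_mul_I]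

lemma e2_half_int (n : ℤ) : e2 (n/2) = (-1)^n := by
  rw [← e2_half, e2_zpow]; congr 1; ring

/-- equality of `e2` when the arguments differ by an integer -/
lemma e2_congr {a b : ℂ} (n : ℤ) (h : a = b + n) : e2 a = e2 b := by
  rw [h, e2_add, e2_int, mul_one]

lemma norm_e2 (a : ℂ) : ‖e2 a‖ = Real.exp (-(2 * Real.pi) * a.im) := by
  rw [e2, Complex.norm_exp]; congr 1
  simp

lemma qpow_eq (τ x : ℂ) : qpow τ x = e2 (τ * x) := by
  rw [qpow, e2]; congr 1; ring

lemma norm_e2_lt {τ : ℂ} (hτ : 0 < τ.im) : ‖e2 τ‖ < 1 := by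
  rw [norm_e2, Real.exp_lt_one_iff]
  have := Real.pi_pos
  nlinarith [mul_pos this hτ]

lemma tri_cast (j : ℤ) : ((tri j : ℤ) : ℂ) = j * (j+1) / 2 := by
  have h2 : (2:ℂ) * (tri j : ℂ) = j * (j+1) := by exact_mod_cast two_tri j
  linear_combination h2 / 2

lemma eta_eq (τ : ℂ) : eta τ = e2 (τ / 24) * pinf (e2 τ) 1 := by
  rw [eta, pinf, qpow_eq]
  congr 1
  · congr 1; ring
  · refine tprod_congr fun n => ?_
    rw [qpow_eq, e2_pow, one_mul]; congr 2; push_cast; ring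

lemma mumford11 {τ : ℂ} (hτ : 0 < τ.im) (z : ℂ) :
    mumford 1 1 τ z = I * e2 (τ/8 + z/2) * ((1 - (e2 z)⁻¹) * pinf (e2 τ) 1 * pinf (e2 τ) (e2 z) *
      pinf (e2 τ) (e2 z)⁻¹) := by
  rw [← jtp (norm_e2_lt hτ) (e2_ne_zero _) (e2_ne_zero _), ← tsum_mul_left, mumford]
  refine tsum_congr fun n => ?_
  have hI : I = e2 (1/4) := by
    rw [e2, show 2 * (Real.pi:ℂ) * Complex.I * (1/4) = Real.pi / 2 * Complex.I by ring,
      Complex.exp_pi_div_two_mul_I]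
  conv_rhs => rw [hI, ← e2_half_int, e2_zpow, e2_zpow, tri_cast, ← e2_add, ← e2_add, ← e2_add,
    ← e2_add, e2]
  congr 1
  push_cast
  ring

lemma mumford10 {τ : ℂ} (hτ : 0 < τ.im) (z : ℂ) :
    mumford 1 0 τ z = e2 (τ/8 + z/2) * ((1 + (e2 z)⁻¹) * pinf (e2 τ) 1 * pinf (e2 τ) (-e2 z) *
      pinf (e2 τ) (-(e2 z)⁻¹)) := by
  have hj := jtp (norm_e2_lt hτ) (e2_ne_zero _) (neg_ne_zero.2 (e2_ne_zero z))
  rw [inv_neg, sub_neg_eq_add] at hj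
  rw [← hj, ← tsum_mul_left, mumford]
  refine tsum_congr fun n => ?_
  have h1 : (-1:ℂ)^n * e2 τ ^ tri n * (-e2 z)^n = e2 τ ^ tri n * e2 z ^ n := by
    rw [mul_right_comm, ← mul_zpow]; simp [mul_comm]
  rw [h1, e2_zpow, e2_zpow, tri_cast, ← e2_add, ← e2_add, e2]
  congr 1
  push_cast
  ring

lemma pinf_sq {q : ℂ} (hq : ‖q‖ < 1) (x : ℂ) :
    pinf q x * pinf q (-x) = pinf (q^2) (x^2) := by
  rw [pinf, pinf, pinf, ← (multipliable_pinf hq x).tprod_mul (multipliable_pinf hq (-x))]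
  refine tprod_congr fun n => ?_
  ring

lemma not_lattice {τ z : ℂ} (h1 : ¬ InLattice τ z) (j : ℤ) : e2 z * e2 τ ^ j ≠ 1 := by
  intro h
  rw [e2_zpow, ← e2_add, e2_eq_one_iff] at h
  obtain ⟨n, hn⟩ := h
  exact h1 ⟨n, -j, by push_cast; linear_combination hn⟩

lemma not_lattice2 {τ z : ℂ} (h1 : ¬ InLattice τ z) (h2 : ¬ InLattice τ (z + 1/2)) (j : ℤ) :
    e2 (2 * z) * e2 (2 * τ) ^ j ≠ 1 := by
  intro h
  have a := not_lattice h1 j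
  have b := not_lattice h2 j
  rw [e2_add, e2_half] at b
  have : (e2 z * e2 τ ^ j)^2 = 1 := by
    rw [← h, two_mul, two_mul, e2_add, e2_add, mul_zpow]; ring
  rw [sq] at this
  rcases mul_self_eq_one_iff.1 this with h | h
  · exact a h
  · apply b; linear_combination -h

theorem G_eq {τ : ℂ} (hτ : 0 < τ.im) {z : ℂ} (h1 : ¬ InLattice τ z)
    (h2 : ¬ InLattice τ (z + 1/2)) :
    ∑' j : ℤ, e2 (j/2 + j^2 * τ + z + j * τ) / (1 - e2 (2 * z + 2 * j * τ)) =
      -I * eta τ ^ 2 * eta (2 * τ) ^ 2 / (mumford 1 1 τ z * mumford 1 0 τ z) := by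
  have hq := norm_e2_lt hτ
  have hτ2 : 0 < (2 * τ).im := by simpa using hτ
  have hq2 := norm_e2_lt hτ2
  have hne := not_lattice2 h1 h2
  have hr := recip hq2 (e2_ne_zero _) (e2_ne_zero (2 * z)) hne
  have hS : ∑' j : ℤ, e2 (j/2 + j^2 * τ + z + j * τ) / (1 - e2 (2 * z + 2 * j * τ)) =
      e2 z * ∑' j : ℤ, (-1 : ℂ) ^ j * e2 (2*τ) ^ tri j / (1 - e2 (2*z) * e2 (2*τ) ^ j) := by
    rw [← tsum_mul_left]
    refine tsum_congr fun j => ?_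
    rw [← mul_div_assoc]
    congr 1
    · rw [← e2_half_int, e2_zpow, tri_cast, ← e2_add, ← e2_add]; congr 1; ring
    · rw [e2_zpow, ← e2_add]; congr 2; ring
  rw [hS]
  have hP := pinf_one_ne_zero hq
  have hP2 := pinf_one_ne_zero hq2
  set S := ∑' j : ℤ, (-1 : ℂ) ^ j * e2 (2*τ) ^ tri j / (1 - e2 (2*z) * e2 (2*τ) ^ j) with hSdef
  have hE2 : e2 (2*z) = e2 z ^ 2 := by rw [e2_pow]; norm_num
  have hQ2 : e2 (2*τ) = e2 τ ^ 2 := by rw [e2_pow]; norm_num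
  have ha := pinf_sq hq (e2 z)
  have hb := pinf_sq hq (e2 z)⁻¹
  rw [inv_pow, ← hE2, ← hQ2] at hb
  rw [← hE2, ← hQ2] at ha
  have hmm : mumford 1 1 τ z * mumford 1 0 τ z = I * e2 (τ/4) * (e2 z - (e2 z)⁻¹) *
      pinf (e2 τ) 1 ^ 2 * pinf (e2 (2*τ)) (e2 (2*z)) * pinf (e2 (2*τ)) (e2 (2*z))⁻¹ := by
    rw [mumford11 hτ, mumford10 hτ, ← ha, ← hb]
    have h4 : e2 (τ/4) * e2 z = e2 (τ/8 + z/2) * e2 (τ/8 + z/2) := by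
      rw [← e2_add, ← e2_add]; congr 1; ring
    have hz := e2_ne_zero z
    calc _ = I * (e2 (τ/8 + z/2) * e2 (τ/8 + z/2)) * ((1 - (e2 z)⁻¹) * (1 + (e2 z)⁻¹)) *
        pinf (e2 τ) 1 ^ 2 * (pinf (e2 τ) (e2 z) * pinf (e2 τ) (-e2 z)) *
        (pinf (e2 τ) (e2 z)⁻¹ * pinf (e2 τ) (-(e2 z)⁻¹)) := by ring
      _ = _ := by
        rw [← h4]
        field_simp
        ring
  have hz := e2_ne_zero z
  have hlhs : (1 - e2 (2*z)) * pinf (e2 (2*τ)) (e2 (2*z)) * pinf (e2 (2*τ)) (e2 (2*z))⁻¹ ≠ 0 := by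
    intro h0
    rw [h0, zero_mul] at hr
    exact pow_ne_zero 2 hP2 hr
  have hmm0 : mumford 1 1 τ z * mumford 1 0 τ z ≠ 0 := by
    rw [hmm]
    have hfac : I * e2 (τ/4) * (e2 z - (e2 z)⁻¹) *
      pinf (e2 τ) 1 ^ 2 * pinf (e2 (2*τ)) (e2 (2*z)) * pinf (e2 (2*τ)) (e2 (2*z))⁻¹ =
      (-I * e2 (τ/4) * (e2 z)⁻¹ * pinf (e2 τ) 1 ^ 2) *
      ((1 - e2 (2*z)) * pinf (e2 (2*τ)) (e2 (2*z)) * pinf (e2 (2*τ)) (e2 (2*z))⁻¹) := by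
      rw [hE2]; field_simp; ring
    rw [hfac]
    refine mul_ne_zero ?_ hlhs
    refine mul_ne_zero (mul_ne_zero (mul_ne_zero (neg_ne_zero.2 I_ne_zero) (e2_ne_zero _))
      (inv_ne_zero hz)) (pow_ne_zero 2 hP)
  rw [eq_div_iff hmm0, hmm, eta_eq, eta_eq]
  have h24 : (e2 (τ/24))^2 * (e2 (2*τ/24))^2 = e2 (τ/4) := by
    rw [e2_pow, e2_pow, ← e2_add]; congr 1; push_cast; ring
  rw [mul_pow, mul_pow]
  have : -I * (e2 (τ/24) ^ 2 * pinf (e2 τ) 1 ^ 2) * (e2 (2*τ/24) ^ 2 * pinf (e2 (2*τ)) 1 ^ 2) =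
    -I * e2 (τ/4) * pinf (e2 τ) 1 ^ 2 * pinf (e2 (2*τ)) 1 ^ 2 := by rw [← h24]; ring
  rw [this, hr]
  have hzz : e2 z * (e2 z - (e2 z)⁻¹) = -(1 - e2 (2*z)) := by rw [hE2]; field_simp; ring
  linear_combination (I * e2 (τ/4) * pinf (e2 τ) 1 ^ 2 * pinf (e2 (2*τ)) (e2 (2*z)) *
    pinf (e2 (2*τ)) (e2 (2*z))⁻¹ * S) * hzz

lemma summable_e2_quad (α β γ : ℂ) (hγ : 0 < γ.im) :
    Summable fun n : ℤ => ‖e2 (α + β * n + γ * n^2)‖ := by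
  have hpi := Real.pi_pos
  refine Summable.of_nonneg_of_le (fun _ => norm_nonneg _) (fun n => ?_)
    ((summable_gauss1 (a := 2 * Real.pi * γ.im) (by positivity) (2 * Real.pi * |β.im|)).mul_left
      (Real.exp (-(2*Real.pi) * α.im)))
  rw [norm_e2, ← Real.exp_add]
  apply Real.exp_le_exp.2
  have him : (α + β * n + γ * n^2).im = α.im + β.im * n + γ.im * n^2 := by
    have h1 : ((n:ℂ)^2) = ((n^2 : ℝ) : ℂ) := by push_cast; rfl
    have h2 : (n:ℂ) = ((n : ℝ) : ℂ) := by push_cast; rfl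
    rw [h1, h2]
    simp only [Complex.add_im, Complex.im_mul_ofReal]
  rw [him]
  have h3 : -(β.im * n) ≤ |β.im| * |(n:ℝ)| := by
    rw [← abs_mul]; exact neg_le_abs _
  nlinarith

/-- signed geometric sum -/
def ind (a b i : ℤ) : ℂ := (if i < b then 1 else 0) - (if i < a then 1 else 0)

lemma geo_Ico {X : ℂ} (hX0 : X ≠ 0) (a : ℤ) (k : ℕ) :
    (∑ i ∈ Finset.Ico a (a + k), X ^ i) * (1 - X) = X ^ a - X ^ (a + k) := by
  induction k with
  | zero => simp
  | succ k ih =>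
    have : Finset.Ico a (a + (k+1:ℕ)) = insert (a + k) (Finset.Ico a (a+k)) := by
      ext t; simp only [Finset.mem_Ico, Finset.mem_insert]; push_cast; omega
    rw [this, Finset.sum_insert (by simp), add_mul, ih]
    push_cast
    rw [← add_assoc, zpow_add_one₀ hX0 (a+k)]; ring

lemma hasSum_geo_le {X : ℂ} (hX0 : X ≠ 0) (hX : X ≠ 1) (a b : ℤ) (hab : a ≤ b) :
    HasSum (fun i => ind a b i * X ^ i) ((X ^ a - X ^ b) / (1 - X)) := by
  obtain ⟨k, rfl⟩ := Int.le.dest hab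
  have h := geo_Ico hX0 a k
  have h1 : (1 - X) ≠ 0 := sub_ne_zero.2 (Ne.symm hX)
  rw [← h, mul_div_assoc, div_self h1, mul_one]
  have : ∑ i ∈ Finset.Ico a (a + k), X ^ i = ∑ i ∈ Finset.Ico a (a + k), ind a (a+k) i * X ^ i := by
    refine Finset.sum_congr rfl fun i hi => ?_
    rw [Finset.mem_Ico] at hi
    rw [ind, if_pos hi.2, if_neg (by omega)]; ring
  rw [this]
  refine hasSum_sum_of_ne_finset_zero fun i hi => ?_
  rw [Finset.mem_Ico] at hi
  rw [ind]
  by_cases h1 : i < a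
  · rw [if_pos h1, if_pos (by omega)]; ring
  · rw [if_neg h1, if_neg (by omega)]; ring

lemma ind_swap (a b i : ℤ) : ind a b i = - ind b a i := by unfold ind; ring

lemma hasSum_geo {X : ℂ} (hX0 : X ≠ 0) (hX : X ≠ 1) (a b : ℤ) :
    HasSum (fun i => ind a b i * X ^ i) ((X ^ a - X ^ b) / (1 - X)) := by
  rcases le_total a b with h | h
  · exact hasSum_geo_le hX0 hX a b h
  · have := (hasSum_geo_le hX0 hX b a h).neg
    have e1 : (fun i => ind a b i * X ^ i) = fun i => -(ind b a i * X ^ i) := by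
      funext i; rw [ind_swap]; ring
    have e3 : (X ^ a - X ^ b) / (1 - X) = -((X ^ b - X ^ a) / (1 - X)) := by
      rw [← neg_div]; congr 1; ring
    rw [e1, e3]; exact this

lemma quad1 (M n l i : ℝ) (hM : 1 ≤ M) (h1 : M * n ≤ i) (h2 : i ≤ l) :
    (n^2 + l^2 + i^2) / (4 * M) ≤ M * l^2 + n^2 + 2 * i * (n + l) := by
  rw [div_le_iff₀ (by linarith)]
  rcases le_total 0 i with hi | hi
  · have a1 : 0 ≤ i * (l - i) := mul_nonneg hi (by linarith)
    have a2 : (n^2 + l^2 + i^2) / 4 ≤ M * l^2 + n^2 + 2 * i * (n + l) := by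
      nlinarith [sq_nonneg (3 * n + 4 * i), mul_nonneg (sub_nonneg.2 hM) (sq_nonneg l)]
    have a3 : 0 ≤ (n^2 + l^2 + i^2) / 4 := by positivity
    nlinarith
  · have a1 : 0 ≤ (i - M * n) * (-i) := mul_nonneg (by linarith) (by linarith)
    have a2 : 0 ≤ (M - 1) * n^2 := mul_nonneg (by linarith) (sq_nonneg _)
    have a3 : l^2 ≤ (M * l)^2 := by
      rw [mul_pow]; nlinarith [mul_nonneg (show 0 ≤ M^2 - 1 by nlinarith) (sq_nonneg l)]
    nlinarith [sq_nonneg (3 * (M * l) + 4 * i), sq_nonneg n, sq_nonneg i]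

lemma quad2 (M n l i : ℝ) (hM : 1 ≤ M) (h : (M * n ≤ i ∧ i ≤ l) ∨ (l ≤ i ∧ i ≤ M * n)) :
    (n^2 + l^2 + i^2) / (4 * M) ≤ M * l^2 + n^2 + 2 * i * (n + l) := by
  rcases h with ⟨h1, h2⟩ | ⟨h1, h2⟩
  · exact quad1 M n l i hM h1 h2
  · have := quad1 M (-n) (-l) (-i) hM (by linarith) (by linarith)
    calc _ = ((-n)^2 + (-l)^2 + (-i)^2) / (4 * M) := by ring
      _ ≤ _ := this
      _ = _ := by ring

/-- the triple-indexed term -/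
def trip (m : ℕ) (τ y d : ℂ) (x : (ℤ × ℤ) × ℤ) : ℂ :=
  ind (m * x.1.1) x.1.2 x.2 *
    e2 (x.1.1 / 2 + m * x.1.2 * d + (m * x.1.2^2 + x.1.1^2) * τ +
      (x.2 + 1/2) * (y + d + 2 * (x.1.1 + x.1.2) * τ))

lemma summable_trip {m : ℕ} (hm : 0 < m) {τ : ℂ} (hτ : 0 < τ.im) (y d : ℂ) :
    Summable (trip m τ y d) := by
  have hpi := Real.pi_pos
  have hM : (1:ℝ) ≤ m := by exact_mod_cast hm
  set a : ℝ := 2 * Real.pi * τ.im / (4 * m) with ha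
  set c : ℝ := 2 * Real.pi * (m * |d.im| + τ.im + |(y+d).im|) with hc
  set K : ℝ := Real.exp (Real.pi * |(y+d).im|)
  have ha0 : 0 < a := by positivity
  have hg := summable_gauss1 ha0 c
  have hg2 := hg.mul_of_nonneg hg (fun _ => (Real.exp_pos _).le) (fun _ => (Real.exp_pos _).le)
  have hg3 := hg2.mul_of_nonneg hg (fun _ => by positivity) (fun _ => (Real.exp_pos _).le)
  refine Summable.of_norm_bounded (hg3.mul_left K) ?_
  rintro ⟨⟨n, l⟩, i⟩
  simp only [trip]
  by_cases hr : ((m:ℤ) * n ≤ i ∧ i < l) ∨ (l ≤ i ∧ i < m * n)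
  · have hind : ‖ind (m * n) l i‖ = 1 := by
      rcases hr with h | h
      · rw [ind, if_pos h.2, if_neg (by omega)]; simp
      · rw [ind, if_pos h.2, if_neg (by omega)]; simp
    have hr' : ((m:ℝ) * n ≤ i ∧ (i:ℝ) ≤ l) ∨ ((l:ℝ) ≤ i ∧ (i:ℝ) ≤ m * n) := by
      rcases hr with h | h
      · left; exact ⟨by exact_mod_cast h.1, by exact_mod_cast h.2.le⟩
      · right; exact ⟨by exact_mod_cast h.1, by exact_mod_cast h.2.le⟩
    have hQ := quad2 m n l i hM hr'
    rw [norm_mul, hind, one_mul, norm_e2]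
    simp only [K]
    rw [← Real.exp_add, ← Real.exp_add, ← Real.exp_add]
    apply Real.exp_le_exp.2
    have him : ((n:ℂ) / 2 + m * l * d + (m * l^2 + n^2) * τ +
      (i + 1/2) * (y + d + 2 * (n + l) * τ)).im = m * l * d.im + (m * l^2 + n^2) * τ.im +
        (i + 1/2) * ((y+d).im + 2 * (n + l) * τ.im) := by
      have e1 : (n:ℂ) / 2 + m * l * d + (m * l^2 + n^2) * τ +
        (i + 1/2) * (y + d + 2 * (n + l) * τ) = ((n / 2 : ℝ) : ℂ) + ((m * l : ℝ) : ℂ) * d +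
        ((m * l^2 + n^2 : ℝ) : ℂ) * τ + ((i + 1/2 : ℝ) : ℂ) * ((y + d) + ((2 * (n + l) : ℝ) : ℂ) * τ) := by
        push_cast; ring
      rw [e1]
      simp only [Complex.add_im, Complex.im_ofReal_mul, Complex.ofReal_im]
      ring
    rw [him]
    have b1 : -(l * d.im) ≤ |d.im| * |(l:ℝ)| := by
      rw [← abs_mul, mul_comm]; exact neg_le_abs _
    have b2 : -(i * (y+d).im) ≤ |(y+d).im| * |(i:ℝ)| := by
      rw [← abs_mul, mul_comm]; exact neg_le_abs _
    have b3 : -(y+d).im ≤ |(y+d).im| := neg_le_abs _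
    have b4 : -(n:ℝ) ≤ |(n:ℝ)| := neg_le_abs _
    have b5 : -(l:ℝ) ≤ |(l:ℝ)| := neg_le_abs _
    have b6 := abs_nonneg (n:ℝ)
    have b7 := abs_nonneg (l:ℝ)
    have b8 := abs_nonneg (i:ℝ)
    have b9 := abs_nonneg d.im
    have b10 := abs_nonneg (y+d).im
    have hQ' : (n^2 + l^2 + i^2 : ℝ) * a ≤
        2 * Real.pi * τ.im * (m * l^2 + n^2 + 2 * i * (n + l)) := by
      have := mul_le_mul_of_nonneg_left hQ (show 0 ≤ 2 * Real.pi * τ.im by positivity)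
      rw [ha]
      calc _ = 2 * Real.pi * τ.im * (((n:ℝ)^2 + l^2 + i^2) / (4 * m)) := by ring
        _ ≤ _ := this
    have m0 : (0:ℝ) ≤ m := by linarith
    have c1 := mul_le_mul_of_nonneg_left b1 m0
    have lin : -(m * l * d.im + (i + 1/2) * (y+d).im + (n + l) * τ.im) ≤
        (m * |d.im| + τ.im + |(y+d).im|) * (|(n:ℝ)| + |(l:ℝ)| + |(i:ℝ)|) + |(y+d).im| / 2 := by
      have c2 := mul_le_mul_of_nonneg_right b4 hτ.le
      have c3 := mul_le_mul_of_nonneg_right b5 hτ.le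
      have d1 : 0 ≤ (m * |d.im|) * (|(n:ℝ)| + |(i:ℝ)|) := by positivity
      have d2 : 0 ≤ τ.im * |(i:ℝ)| := by positivity
      have d3 : 0 ≤ |(y+d).im| * (|(n:ℝ)| + |(l:ℝ)|) := by positivity
      nlinarith
    have lin' := mul_le_mul_of_nonneg_left lin (show 0 ≤ 2 * Real.pi by positivity)
    rw [hc]
    nlinarith
  · have hind : ind (m * n) l i = 0 := by
      rw [ind]; split_ifs <;> first | omega | simp
    rw [hind]; simp only [zero_mul, norm_zero]
    positivity

def At (m : ℕ) (τ y : ℂ) (n : ℤ) : ℂ := e2 (n/2 + m*n*y + (m+1)*n^2*τ)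
def Ht (m : ℕ) (τ y d : ℂ) (j : ℤ) : ℂ :=
  e2 (m*j*d + m*j^2*τ + (y+d)/2 + j*τ) / (1 - e2 (y+d+2*j*τ))
def Gt (τ y d : ℂ) (j : ℤ) : ℂ :=
  e2 (j/2 + j^2*τ + (y+d)/2 + j*τ) / (1 - e2 (y+d+2*j*τ))
def Bt (m : ℕ) (τ y d : ℂ) (n : ℤ) : ℂ := e2 (n/2 + n*y + (m+1)*n*d + (m+1)*n^2*τ)

lemma im_natmul (m : ℕ) (τ : ℂ) : ((m:ℂ) * τ).im = m * τ.im := by simp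

lemma summable_At (m : ℕ) {τ : ℂ} (hτ : 0 < τ.im) (y : ℂ) : Summable fun n => ‖At m τ y n‖ := by
  refine (summable_e2_quad 0 (1/2 + m*y) ((m+1)*τ) ?_).congr fun n => ?_
  · simp; positivity
  · rw [At]; congr 2; ring

lemma summable_Bt (m : ℕ) {τ : ℂ} (hτ : 0 < τ.im) (y d : ℂ) :
    Summable fun n => ‖Bt m τ y d n‖ := by
  refine (summable_e2_quad 0 (1/2 + y + (m+1)*d) ((m+1)*τ) ?_).congr fun n => ?_
  · simp; positivity
  · rw [Bt]; congr 2; ring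

lemma summable_div_bdd {τ : ℂ} (hτ : 0 < τ.im) (w : ℂ) {f : ℤ → ℂ}
    (hf : Summable fun n => ‖f n‖) : Summable fun n : ℤ => ‖f n / (1 - e2 (w + n * τ))‖ := by
  obtain ⟨C, hC, h⟩ := inv_one_sub_bdd (norm_e2_lt hτ) (e2_ne_zero τ) (e2_ne_zero w)
  refine Summable.of_nonneg_of_le (fun _ => norm_nonneg _) (fun n => ?_) (hf.mul_right C)
  rw [div_eq_mul_inv, norm_mul]
  refine mul_le_mul_of_nonneg_left ?_ (norm_nonneg _)
  have := h n
  rwa [e2_zpow, ← e2_add] at this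

lemma im_two {τ : ℂ} (hτ : 0 < τ.im) : 0 < (2 * τ).im := by
  simp; exact hτ

lemma summable_Ht {m : ℕ} (hm : 0 < m) {τ : ℂ} (hτ : 0 < τ.im) (y d : ℂ) :
    Summable fun n => ‖Ht m τ y d n‖ := by
  have h0 : Summable fun n : ℤ => ‖e2 (m*n*d + m*n^2*τ + (y+d)/2 + n*τ)‖ := by
    refine (summable_e2_quad ((y+d)/2) (m*d + τ) (m*τ) ?_).congr fun n => ?_
    · simp; positivity
    · congr 2; ring
  refine (summable_div_bdd (im_two hτ) (y+d) h0).congr fun n => ?_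
  rw [Ht]; congr 5; ring

lemma summable_Gt {τ : ℂ} (hτ : 0 < τ.im) (y d : ℂ) :
    Summable fun n => ‖Gt τ y d n‖ := by
  have h0 : Summable fun n : ℤ => ‖e2 (n/2 + n^2*τ + (y+d)/2 + n*τ)‖ := by
    refine (summable_e2_quad ((y+d)/2) (1/2 + τ) τ hτ).congr fun n => ?_
    congr 2; ring
  refine (summable_div_bdd (im_two hτ) (y+d) h0).congr fun n => ?_
  rw [Gt]; congr 5; ring

def shearA : ℤ × ℤ ≃ ℤ × ℤ where
  toFun x := (x.1, x.1 + x.2)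
  invFun x := (x.1, x.2 - x.1)
  left_inv x := by ext <;> simp
  right_inv x := by ext <;> simp

def shearB : ℤ × ℤ ≃ ℤ × ℤ where
  toFun x := (x.1 + x.2, x.2)
  invFun x := (x.1 - x.2, x.2)
  left_inv x := by ext <;> simp
  right_inv x := by ext <;> simp

lemma hs_val {ι : Type} {f : ι → ℂ} {a b : ℂ} (h : HasSum f a) (e : b = a) :
    HasSum f b := e ▸ h

lemma hs_fun {ι : Type} {f g : ι → ℂ} {a : ℂ} (h : HasSum f a) (e : ∀ x, g x = f x) :
    HasSum g a := (funext e : g = f) ▸ h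

lemma hasSum_trip_fiber (m : ℕ) {τ y d : ℂ} (hX : ∀ j : ℤ, e2 (y+d+2*j*τ) ≠ 1) (n l : ℤ) :
    HasSum (fun i => trip m τ y d ((n, l), i))
      (At m τ y n * Ht m τ y d (n+l) - Gt τ y d (n+l) * Bt m τ y d l) := by
  have h := hasSum_geo (e2_ne_zero _) (hX (n+l)) (m*n) l
  have h2 := h.mul_left (e2 (n / 2 + m * l * d + (m * l^2 + n^2) * τ +
      (1/2) * (y + d + 2 * (n + l) * τ)))
  have e1 : (fun i => trip m τ y d ((n, l), i)) = fun i => e2 (n / 2 + m * l * d + (m * l^2 + n^2) * τ +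
      (1/2) * (y + d + 2 * (n + l) * τ)) * (ind (m*n) l i * e2 (y+d+2*((n+l:ℤ):ℂ)*τ)^i) := by
    funext i
    rw [e2_zpow, mul_left_comm, ← e2_add, trip]
    congr 2; push_cast; ring
  rw [e1]
  refine hs_val h2 ?_
  rw [At, Ht, Gt, Bt, e2_zpow, e2_zpow, mul_div_assoc', mul_div_assoc',
    mul_sub, ← e2_add, ← e2_add, div_mul_eq_mul_div, ← e2_add, ← e2_add, ← sub_div]
  congr 2
  · congr 1; push_cast; ring
  · apply e2_congr l; push_cast; ring

lemma hasSum_trip {m : ℕ} (hm : 0 < m) {τ : ℂ} (hτ : 0 < τ.im) {y d : ℂ}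
    (hX : ∀ j : ℤ, e2 (y+d+2*j*τ) ≠ 1) :
    HasSum (trip m τ y d) ((∑' n, At m τ y n) * (∑' n, Ht m τ y d n) -
      (∑' n, Gt τ y d n) * (∑' n, Bt m τ y d n)) := by
  have sA := summable_At m hτ y
  have sH := summable_Ht hm hτ y d
  have sG := summable_Gt hτ y d
  have sB := summable_Bt m hτ y d
  have p1 := sA.of_norm.hasSum.mul sH.of_norm.hasSum (summable_mul_of_summable_norm sA sH)
  have p2 := sG.of_norm.hasSum.mul sB.of_norm.hasSum (summable_mul_of_summable_norm sG sB)
  have p3 := (shearA.hasSum_iff.2 p1).sub (shearB.hasSum_iff.2 p2)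
  have hs := (summable_trip hm hτ y d).hasSum
  have p4 := hs.prod_fiberwise fun x => hasSum_trip_fiber m hX x.1 x.2
  have := p4.unique p3
  rw [← this]; exact hs

def aa (τ : ℂ) (i n : ℤ) : ℂ := e2 (n/2 + n^2*τ + (2*i+1)*n*τ)

def bb (m : ℕ) (τ y d : ℂ) (i l : ℤ) : ℂ :=
  e2 (m*l*d + m*l^2*τ + (2*i+1)*l*τ + (i+1/2)*(y+d))

def cc (m : ℕ) (τ : ℂ) (i : ℤ) : ℂ := - ∑' n : ℤ, (if i < m * n then aa τ i n else 0)

lemma summable_aa {τ : ℂ} (hτ : 0 < τ.im) (i : ℤ) : Summable fun n => ‖aa τ i n‖ := by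
  refine (summable_e2_quad 0 (1/2 + (2*i+1)*τ) τ hτ).congr fun n => ?_
  rw [aa]; congr 2; ring

lemma summable_bb {m : ℕ} (hm : 0 < m) {τ : ℂ} (hτ : 0 < τ.im) (y d : ℂ) (i : ℤ) :
    Summable fun n => ‖bb m τ y d i n‖ := by
  refine (summable_e2_quad ((i+1/2)*(y+d)) (m*d + (2*i+1)*τ) (m*τ) ?_).congr fun n => ?_
  · simp; positivity
  · rw [bb]; congr 2; ring

lemma aa_refl (τ : ℂ) (i n : ℤ) : aa τ i (-(2*i+1) - n) = - aa τ i n := by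
  have : e2 (1/2) = -1 := e2_half
  rw [← neg_one_mul (aa τ i n), ← this, aa, aa, ← e2_add]
  apply e2_congr (-(i+1+n)); push_cast; ring

lemma tsum_aa (τ : ℂ) (i : ℤ) : ∑' n, aa τ i n = 0 := by
  have h := (Equiv.subLeft (-(2*i+1))).tsum_eq (aa τ i)
  have h2 : ∑' n, aa τ i ((Equiv.subLeft (-(2*i+1))) n) = - ∑' n, aa τ i n := by
    rw [← tsum_neg]; congr 1; funext n
    rw [Equiv.subLeft_apply]; exact aa_refl τ i n
  rw [h] at h2
  linear_combination h2 / 2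

lemma tsum_bb {m : ℕ} (hm : 0 < m) (τ y d : ℂ) (i : ℤ) :
    ∑' n, bb m τ y d i n = e2 ((i+1/2)*y - (i+1/2)^2*τ/m) * jTheta (2*i+1) m τ d := by
  rw [jTheta, ← tsum_mul_left]
  congr 1; funext n
  have hm' : (m:ℂ) ≠ 0 := by exact_mod_cast hm.ne'
  rw [qpow_eq, ← e2, ← e2_add, ← e2_add, bb]
  congr 1; field_simp; ring

lemma trip_split (m : ℕ) (τ y d : ℂ) (i : ℤ) (x : ℤ × ℤ) :
    trip m τ y d (x, i) = aa τ i x.1 * (if i < x.2 then bb m τ y d i x.2 else 0) -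
      (if i < m * x.1 then aa τ i x.1 else 0) * bb m τ y d i x.2 := by
  rcases x with ⟨n, l⟩
  have : e2 (n / 2 + m * l * d + (m * l^2 + n^2) * τ + (i + 1/2) * (y + d + 2 * (n + l) * τ))
      = aa τ i n * bb m τ y d i l := by
    rw [aa, bb, ← e2_add]; congr 1; ring
  have h : trip m τ y d ((n, l), i) = ind (m * n) l i * (aa τ i n * bb m τ y d i l) := by
    rw [← this]; rfl
  rw [h]
  show ind (m * n) l i * (aa τ i n * bb m τ y d i l) =
    aa τ i n * (if i < l then bb m τ y d i l else 0) -
      (if i < m * n then aa τ i n else 0) * bb m τ y d i l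
  unfold ind
  generalize aa τ i n = u
  generalize bb m τ y d i l = v
  by_cases h1 : i < l <;> by_cases h2 : i < m * n <;> simp only [h1, h2, if_true, if_false] <;> ring

lemma norm_ite_le (p : Prop) [Decidable p] (u : ℂ) : ‖(if p then u else 0)‖ ≤ ‖u‖ := by
  by_cases h : p <;> simp [h]

lemma fiber_aux {a b a2 b2 : ℤ → ℂ} (sa : Summable fun n => ‖a n‖) (sb : Summable fun n => ‖b n‖)
    (ha : ∀ n, ‖a2 n‖ ≤ ‖a n‖) (hb : ∀ n, ‖b2 n‖ ≤ ‖b n‖) (h0 : ∑' n, a n = 0) :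
    HasSum (fun x : ℤ × ℤ => a x.1 * b2 x.2 - a2 x.1 * b x.2) (-(∑' n, a2 n) * ∑' n, b n) := by
  have sa2 : Summable fun n => ‖a2 n‖ :=
    Summable.of_nonneg_of_le (fun _ => norm_nonneg _) ha sa
  have sb2 : Summable fun n => ‖b2 n‖ :=
    Summable.of_nonneg_of_le (fun _ => norm_nonneg _) hb sb
  have p1 := sa.of_norm.hasSum.mul sb2.of_norm.hasSum (summable_mul_of_summable_norm sa sb2)
  have p2 := sa2.of_norm.hasSum.mul sb.of_norm.hasSum (summable_mul_of_summable_norm sa2 sb)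
  have p3 := p1.sub p2
  rw [h0, zero_mul, zero_sub, ← neg_mul] at p3
  exact p3

lemma fiber_i {m : ℕ} (hm : 0 < m) {τ : ℂ} (hτ : 0 < τ.im) (y d : ℂ) (i : ℤ) :
    HasSum (fun x : ℤ × ℤ => trip m τ y d (x, i))
      (cc m τ i * (e2 ((i+1/2)*y - (i+1/2)^2*τ/m) * jTheta (2*i+1) m τ d)) := by
  have h := fiber_aux (a := aa τ i) (b := bb m τ y d i)
    (a2 := fun n => if i < m * n then aa τ i n else 0)
    (b2 := fun n => if i < n then bb m τ y d i n else 0)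
    (summable_aa hτ i) (summable_bb hm hτ y d i) (fun n => norm_ite_le _ _)
    (fun n => norm_ite_le _ _) (tsum_aa τ i)
  rw [tsum_bb hm] at h
  exact hs_fun h fun x => trip_split m τ y d i x

lemma main_one {m : ℕ} (hm : 0 < m) {τ : ℂ} (hτ : 0 < τ.im) {y d : ℂ}
    (hX : ∀ j : ℤ, e2 (y+d+2*j*τ) ≠ 1) :
    HasSum (fun i : ℤ => cc m τ i * (e2 ((i+1/2)*y - (i+1/2)^2*τ/m) * jTheta (2*i+1) m τ d))
     ((∑' n, At m τ y n) * (∑' n, Ht m τ y d n) -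
      (∑' n, Gt τ y d n) * (∑' n, Bt m τ y d n)) := by
  have h := hasSum_trip hm hτ hX
  have h2 : HasSum (fun x : ℤ × (ℤ × ℤ) => trip m τ y d (x.2, x.1)) _ :=
    ((Equiv.prodComm ℤ (ℤ × ℤ)).hasSum_iff).2 h
  exact h2.prod_fiberwise (fiber_i hm hτ y d)

lemma jTheta_eq (k m : ℂ) (τ z : ℂ) :
    jTheta k m τ z = ∑' j : ℤ, e2 (m * (j + k/(2*m)) * z + τ * (m * (j + k/(2*m))^2)) := by
  rw [jTheta]; congr 1; funext j
  rw [qpow_eq, ← e2, ← e2_add]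

lemma jTheta_neg_arg (k m τ z : ℂ) : jTheta k m τ (-z) = jTheta (-k) m τ z := by
  rw [jTheta_eq, jTheta_eq, ← (Equiv.neg ℤ).tsum_eq]
  congr 1; funext j
  congr 1; simp only [Equiv.neg_apply]; push_cast; ring

lemma jTheta_shift {m : ℂ} (hm : m ≠ 0) (k τ z : ℂ) (r : ℤ) :
    jTheta (k + 2*m*r) m τ z = jTheta k m τ z := by
  rw [jTheta_eq, jTheta_eq, ← (Equiv.addRight r).tsum_eq
    (fun j : ℤ => e2 (m * (j + k/(2*m)) * z + τ * (m * (j + k/(2*m))^2)))]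
  congr 1; funext j
  have : (k + 2*m*r)/(2*m) = k/(2*m) + r := by field_simp
  rw [this]
  congr 1; simp only [Equiv.coe_addRight]; push_cast; ring

/-- antisymmetrised theta -/
def TT (m : ℕ) (τ d : ℂ) (K : ℂ) : ℂ := jTheta K m τ d - jTheta (-K) m τ d

lemma TT_neg (m : ℕ) (τ d K : ℂ) : TT m τ d (-K) = - TT m τ d K := by
  rw [TT, TT, neg_neg]; ring

lemma TT_shift {m : ℕ} (hm : 0 < m) (τ d K : ℂ) (r : ℤ) :
    TT m τ d (K + 2*m*r) = TT m τ d K := by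
  have hm' : (m:ℂ) ≠ 0 := by exact_mod_cast hm.ne'
  rw [TT, TT, jTheta_shift hm']
  have : -(K + 2*m*r) = -K + 2*m*((-r : ℤ):ℂ) := by push_cast; ring
  rw [this, jTheta_shift hm']

lemma TT_mid {m : ℕ} (hm : 0 < m) (τ d : ℂ) : TT m τ d m = 0 := by
  have h := TT_shift hm τ d (-m) 1
  rw [TT_neg] at h
  have h2 : -(m:ℂ) + 2*m*((1:ℤ):ℂ) = m := by push_cast; ring
  rw [h2] at h
  linear_combination h/2

def ww (m : ℕ) (τ y : ℂ) (p : ℂ) : ℂ := e2 (p*y - p^2*τ/m)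

lemma aa_neg (τ : ℂ) (i n : ℤ) : aa τ (-(i+1)) (-n) = aa τ i n := by
  rw [aa, aa]; apply e2_congr (-n); push_cast; ring

lemma cc_neg (m : ℕ) {τ : ℂ} (hτ : 0 < τ.im) (i : ℤ) : cc m τ (-(i+1)) = - cc m τ i := by
  have s := (summable_aa hτ i).of_norm
  have s1 : Summable fun n => if i < m * n then aa τ i n else 0 := by
    refine Summable.of_norm_bounded (summable_aa hτ i) fun n => norm_ite_le _ _
  have s2 : Summable fun n => if -(i+1) < m * (-n) then aa τ i n else 0 := by
    refine Summable.of_norm_bounded (summable_aa hτ i) fun n => norm_ite_le _ _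
  have e1 : cc m τ (-(i+1)) = - ∑' n, if -(i+1) < m * (-n) then aa τ i n else 0 := by
    rw [cc, ← (Equiv.neg ℤ).tsum_eq]
    congr 2; funext n
    simp only [Equiv.neg_apply, aa_neg]
  have e2' : (∑' n, if i < m * n then aa τ i n else 0) +
      (∑' n, if -(i+1) < m * (-n) then aa τ i n else 0) = 0 := by
    rw [← s1.tsum_add s2]
    refine Eq.trans ?_ (tsum_aa τ i)
    congr 1; funext n
    by_cases h : i < m * n
    · rw [if_pos h, if_neg (by rw [mul_neg]; omega), add_zero]
    · rw [if_neg h, if_pos (by rw [mul_neg]; omega), zero_add]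
  rw [e1, cc]
  linear_combination -e2'

lemma cc_nat {m : ℕ} (i : ℕ) (τ : ℂ) :
    cc m τ i = - ∑' N : ℕ, (if i < m * (N+1) then aa τ i (N+1) else 0) := by
  rw [cc]
  have hinj : Function.Injective (fun N : ℕ => (N:ℤ) + 1) := fun a b h => by
    simpa using h
  rw [← hinj.tsum_eq]
  · congr 2; funext N
    have : ((i:ℤ) < m * ((N:ℤ)+1)) ↔ i < m * (N+1) := by norm_cast
    simp only [this]
  · intro n hn
    rw [Function.mem_support] at hn
    have : (i:ℤ) < m * n := by
      by_contra h; exact hn (if_neg h)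
    have h2 : 0 < n := by
      by_contra h
      have : (m:ℤ) * n ≤ 0 := mul_nonpos_of_nonneg_of_nonpos (by positivity) (by omega)
      omega
    exact ⟨(n-1).toNat, by simp; omega⟩

lemma diff_sum {m : ℕ} (hm : 0 < m) {τ : ℂ} (hτ : 0 < τ.im) {y d : ℂ}
    (hX : ∀ j : ℤ, e2 (y+d+2*j*τ) ≠ 1) (hX2 : ∀ j : ℤ, e2 (y+(-d)+2*j*τ) ≠ 1) :
    HasSum (fun i : ℕ => cc m τ i *
      ((ww m τ y (i+1/2) + ww m τ (-y) (i+1/2)) * TT m τ d (2*i+1)))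
     (((∑' n, At m τ y n) * (∑' n, Ht m τ y d n) -
      (∑' n, Gt τ y d n) * (∑' n, Bt m τ y d n)) -
      ((∑' n, At m τ y n) * (∑' n, Ht m τ y (-d) n) -
      (∑' n, Gt τ y (-d) n) * (∑' n, Bt m τ y (-d) n))) := by
  have h := (main_one hm hτ hX).sub (main_one hm hτ hX2)
  have h2 := hs_fun (g := fun i : ℤ => cc m τ i * (ww m τ y (i+1/2) * TT m τ d (2*i+1))) h
    (fun i => by rw [jTheta_neg_arg, TT, ww]; ring)
  have h3 := h2.nat_add_neg_add_one
  refine hs_fun h3 fun i => ?_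
  have e1 : ((-((i:ℤ)+1) : ℤ) : ℂ) = -(i+1) := by push_cast; ring
  have e3 : ww m τ y (-(i+1) + 1/2) = ww m τ (-y) (i+1/2) := by
    rw [ww, ww]; congr 1; ring
  have e4 : (2 * -((i:ℂ)+1) + 1) = -(2*i+1) := by ring
  rw [cc_neg m hτ, e1, e3, e4, TT_neg]
  push_cast
  ring

lemma TT_bdd {m : ℕ} (hm : 0 < m) (τ d : ℂ) : ∃ C, ∀ i : ℕ, ‖TT m τ d (2*i+1)‖ ≤ C := by
  refine ⟨∑ s ∈ Finset.range m, ‖TT m τ d (2*s+1)‖, fun i => ?_⟩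
  have h : TT m τ d (2*i+1) = TT m τ d (2*(i % m : ℕ)+1) := by
    rw [← TT_shift hm τ d (2*(i % m : ℕ)+1) ((i / m : ℕ) : ℤ)]
    have h1 := Nat.mod_add_div i m
    generalize i / m = r at *
    generalize i % m = s at *
    congr 1
    rw [← h1]; push_cast; ring
  rw [h]
  exact Finset.single_le_sum (f := fun s : ℕ => ‖TT m τ d (2*s+1)‖) (fun _ _ => norm_nonneg _)
    (Finset.mem_range.2 (Nat.mod_lt _ hm))

/-- the doubly indexed weights -/
def EE (m : ℕ) (τ y : ℂ) (i N : ℕ) : ℂ :=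
  -(aa τ i (N+1)) * (ww m τ y (i+1/2) + ww m τ (-y) (i+1/2))

lemma norm_aw {m : ℕ} (hm : 0 < m) {τ : ℂ} (hτ : 0 < τ.im) (y : ℂ) (i N : ℕ) (h : i < m * (N+1)) :
    ‖aa τ i (N+1) * ww m τ y (i+1/2)‖ ≤ Real.exp (Real.pi * |y.im|) *
      (Real.exp (-(2*Real.pi*τ.im/m) * (i:ℝ)^2 + (2 * Real.pi * |y.im|) * |(i:ℝ)|) *
        Real.exp (-(2*Real.pi*τ.im/m) * (N:ℝ)^2 + (2 * Real.pi * |y.im|) * |(N:ℝ)|)) := by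
  have hpi := Real.pi_pos
  have hM : (1:ℝ) ≤ m := by exact_mod_cast hm
  have hm0 : (0:ℝ) < m := by linarith
  have h' : (i:ℝ) + 1 ≤ m * (N+1) := by exact_mod_cast h
  rw [aa, ww, ← e2_add, norm_e2, ← Real.exp_add, ← Real.exp_add]
  apply Real.exp_le_exp.2
  have him : ((((N:ℤ)+1:ℤ):ℂ)/2 + ((((N:ℤ)+1:ℤ):ℂ))^2*τ + (2*((i:ℤ):ℂ)+1)*(((N:ℤ)+1:ℤ):ℂ)*τ +
      (((i:ℂ)+1/2)*y - ((i:ℂ)+1/2)^2*τ/m)).im =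
      ((N+1)^2 + (2*i+1)*(N+1) - (i+1/2)^2/m) * τ.im + (i+1/2)*y.im := by
    have e1 : (((N:ℤ)+1:ℤ):ℂ)/2 + ((((N:ℤ)+1:ℤ):ℂ))^2*τ + (2*((i:ℤ):ℂ)+1)*(((N:ℤ)+1:ℤ):ℂ)*τ +
      (((i:ℂ)+1/2)*y - ((i:ℂ)+1/2)^2*τ/m) = (((N+1)/2 : ℝ) : ℂ) +
        (((N+1)^2 + (2*i+1)*(N+1) - (i+1/2)^2/m : ℝ) : ℂ) * τ + ((i+1/2 : ℝ) : ℂ) * y := by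
      push_cast; ring
    rw [e1]
    simp only [Complex.add_im, Complex.im_ofReal_mul, Complex.ofReal_im]
    ring
  rw [him]
  have i0 : (0:ℝ) ≤ i := by positivity
  have N0 : (0:ℝ) ≤ N := by positivity
  have hQ : ((i:ℝ)^2 + N^2)/m ≤ (N+1)^2 + (2*i+1)*(N+1) - (i+1/2)^2/m := by
    rw [le_sub_iff_add_le, ← add_div, div_le_iff₀ hm0]
    have a1 : ((i:ℝ)+1/2)^2 ≤ (i+1/2) * (m*(N+1)) := by nlinarith
    have a2 : (i:ℝ)^2 ≤ (i+1/2) * (m*(N+1)) := by nlinarith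
    have a3 : (N:ℝ)^2 ≤ (N+1)^2 * m := by nlinarith
    nlinarith
  have b2 : -(i * y.im) ≤ |y.im| * i := by nlinarith [neg_le_abs y.im]
  have b3 : -y.im ≤ |y.im| := neg_le_abs _
  have b4 := abs_nonneg y.im
  rw [abs_of_nonneg i0, abs_of_nonneg N0]
  have hQ2 := mul_le_mul_of_nonneg_left hQ (show 0 ≤ 2 * Real.pi * τ.im by positivity)
  have e3 : 2 * Real.pi * τ.im * (((i:ℝ)^2 + N^2)/m) =
    (2*Real.pi*τ.im/m) * (i:ℝ)^2 + (2*Real.pi*τ.im/m) * (N:ℝ)^2 := by ring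
  rw [e3] at hQ2
  have lin : -((i+1/2)*y.im) ≤ |y.im|/2 + |y.im| * i + |y.im| * N := by nlinarith
  have lin2 := mul_le_mul_of_nonneg_left lin (show 0 ≤ 2 * Real.pi by positivity)
  nlinarith

lemma summable_EE {m : ℕ} (hm : 0 < m) {τ : ℂ} (hτ : 0 < τ.im) (y : ℂ) {t : ℕ → ℂ} {C : ℝ}
    (ht : ∀ i, ‖t i‖ ≤ C) :
    Summable fun x : ℕ × ℕ => if x.1 < m * (x.2+1) then EE m τ y x.1 x.2 * t x.1 else 0 := by
  have hpi := Real.pi_pos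
  have hm0 : (0:ℝ) < m := by exact_mod_cast hm
  have C0 : 0 ≤ C := (norm_nonneg _).trans (ht 0)
  have hg := (summable_gauss1 (a := 2*Real.pi*τ.im/m) (by positivity) (2 * Real.pi * |y.im|)).comp_injective
    Nat.cast_injective
  have hg2 := hg.mul_of_nonneg hg (fun _ => (Real.exp_pos _).le) (fun _ => (Real.exp_pos _).le)
  refine Summable.of_norm_bounded (hg2.mul_left (2 * Real.exp (Real.pi * |y.im|) * C)) ?_
  rintro ⟨i, N⟩
  simp only [Function.comp, Int.cast_natCast]
  split_ifs with h
  · have a1 := norm_aw hm hτ y i N h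
    have a2 := norm_aw hm hτ (-y) i N h
    rw [Complex.neg_im, abs_neg] at a2
    have e : EE m τ y i N = -(aa τ i (N+1) * ww m τ y (i+1/2)) - aa τ i (N+1) * ww m τ (-y) (i+1/2) := by
      rw [EE]; ring
    rw [norm_mul, e]
    have a3 := norm_sub_le (-(aa τ i (N+1) * ww m τ y (i+1/2))) (aa τ i (N+1) * ww m τ (-y) (i+1/2))
    rw [norm_neg] at a3
    refine (mul_le_mul (a3.trans (add_le_add a1 a2)) (ht i) (norm_nonneg _) (by positivity)).trans ?_
    apply le_of_eq; ring
  · rw [norm_zero]; positivity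

lemma fin_hs (g : ℕ → ℂ) (b : ℕ) :
    HasSum (fun i => if i < b then g i else 0) (∑ i ∈ Finset.range b, g i) := by
  have h := hasSum_sum_of_ne_finset_zero (f := fun i => if i < b then g i else 0) (s := Finset.range b)
    (L := SummationFilter.unconditional ℕ)
    (fun i hi => if_neg fun h => hi (Finset.mem_range.2 h))
  rwa [Finset.sum_congr rfl fun i hi => if_pos (Finset.mem_range.1 hi)] at h

lemma swap_hs (F : ℕ × ℕ → ℂ) {a : ℂ} (h : HasSum F a) :
    HasSum (fun x : ℕ × ℕ => F (x.2, x.1)) a :=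
  ((Equiv.prodComm ℕ ℕ).hasSum_iff).2 h

lemma double_aux (f : ℕ → ℕ → ℂ) (b : ℕ → ℕ)
    (hs : Summable fun x : ℕ × ℕ => if x.1 < b x.2 then f x.1 x.2 else 0) :
    HasSum (fun N => ∑ i ∈ Finset.range (b N), f i N)
      (∑' i, ∑' N, if i < b N then f i N else 0) := by
  generalize hF : (fun x : ℕ × ℕ => if x.1 < b x.2 then f x.1 x.2 else 0) = F at hs
  have hF2 : ∀ i N, F (i, N) = if i < b N then f i N else 0 := fun i N => by rw [← hF]
  have h1 := swap_hs F hs.hasSum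
  rw [hs.tsum_prod] at h1
  simp only [← hF2]
  refine h1.prod_fiberwise fun N => ?_
  have h3 := fin_hs (fun i => f i N) (b N)
  simp only [← hF2] at h3
  exact h3

lemma cc_mul (m : ℕ) (τ y : ℂ) (i : ℕ) (u : ℂ) :
    cc m τ i * ((ww m τ y (i+1/2) + ww m τ (-y) (i+1/2)) * u) =
      ∑' N : ℕ, if i < m * (N+1) then EE m τ y i N * u else 0 := by
  rw [cc_nat, ← tsum_neg, ← tsum_mul_right]
  refine tsum_congr fun N => ?_
  by_cases h : i < m * (N+1)
  · rw [if_pos h, if_pos h, EE]; ring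
  · rw [if_neg h, if_neg h]; ring

lemma double {m : ℕ} (hm : 0 < m) {τ : ℂ} (hτ : 0 < τ.im) (y : ℂ) {t : ℕ → ℂ} {C : ℝ}
    (ht : ∀ i, ‖t i‖ ≤ C) :
    HasSum (fun N : ℕ => ∑ i ∈ Finset.range (m * (N+1)), EE m τ y i N * t i)
      (∑' i : ℕ, cc m τ i * ((ww m τ y (i+1/2) + ww m τ (-y) (i+1/2)) * t i)) := by
  rw [tsum_congr fun i => cc_mul m τ y i (t i)]
  exact double_aux (fun i N => EE m τ y i N * t i) (fun N => m * (N+1)) (summable_EE hm hτ y ht)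

lemma EE_eq (m : ℕ) (τ y : ℂ) (i N : ℕ) {K : ℂ} (hK : 2*(i:ℂ)+1 = K) :
    EE m τ y i N = -((-1)^(N+1) * qpow τ (((N:ℂ)+1)^2 + K*((N:ℂ)+1) - K^2/(4*m)) *
      (Complex.exp (Real.pi * Complex.I * K * y) + Complex.exp (-(Real.pi * Complex.I) * K * y))) := by
  have h1 : ((-1:ℂ))^(N+1) = e2 (((N:ℂ)+1)/2) := by
    rw [← e2_half, e2_pow]; congr 1; push_cast; ring
  have h2 : Complex.exp (Real.pi * Complex.I * K * y) = e2 (K/2*y) := by rw [e2]; congr 1; ring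
  have h3 : Complex.exp (-(Real.pi * Complex.I) * K * y) = e2 (-(K/2*y)) := by rw [e2]; congr 1; ring
  rw [h1, h2, h3, EE, aa, ww, ww, qpow_eq, mul_add, mul_add, neg_mul, neg_mul, neg_add,
    ← e2_add, ← e2_add, ← e2_add, ← e2_add, ← e2_add, ← hK]
  congr 3 <;> (push_cast; ring)

lemma sum_range_mul (g : ℕ → ℂ) (m n : ℕ) :
    ∑ i ∈ Finset.range (m * n), g i = ∑ r ∈ Finset.range n, ∑ s ∈ Finset.range m, g (m*r+s) := by
  induction n with
  | zero => simp
  | succ n ih => rw [Finset.sum_range_succ, ← ih, mul_add, mul_one, Finset.sum_range_add]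

lemma sum_low (m : ℕ) (h : ℕ → ℂ) :
    ∑ s ∈ Finset.range m, (if 2*s+1 < m then h (2*s+1) else 0) =
      ∑ k ∈ (Finset.Icc 1 (m - 1)).filter (fun k => Odd k), h k := by
  rw [← Finset.sum_filter]
  refine Finset.sum_nbij' (fun s => 2*s+1) (fun k => k/2) ?_ ?_ ?_ ?_ ?_
  · intro s hs
    simp only [Finset.mem_filter, Finset.mem_range] at hs
    simp only [Finset.mem_filter, Finset.mem_Icc]
    exact ⟨by omega, ⟨s, rfl⟩⟩
  · intro k hk
    simp only [Finset.mem_filter, Finset.mem_Icc] at hk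
    obtain ⟨hk, ⟨s, rfl⟩⟩ := hk
    simp only [Finset.mem_filter, Finset.mem_range]
    omega
  · intro s _; omega
  · intro k hk
    simp only [Finset.mem_filter, Finset.mem_Icc] at hk
    obtain ⟨hk, ⟨s, rfl⟩⟩ := hk
    omega
  · intro s _; rfl

lemma sum_high (m : ℕ) (h : ℕ → ℂ) :
    ∑ s ∈ Finset.range m, (if m < 2*s+1 then h (2*m-(2*s+1)) else 0) =
      ∑ k ∈ (Finset.Icc 1 (m - 1)).filter (fun k => Odd k), h k := by
  rw [← Finset.sum_filter]
  refine Finset.sum_nbij' (fun s => 2*m-(2*s+1)) (fun k => (2*m-k)/2) ?_ ?_ ?_ ?_ ?_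
  · intro s hs
    simp only [Finset.mem_filter, Finset.mem_range] at hs
    simp only [Finset.mem_filter, Finset.mem_Icc]
    exact ⟨by omega, ⟨m-s-1, by omega⟩⟩
  · intro k hk
    simp only [Finset.mem_filter, Finset.mem_Icc] at hk
    obtain ⟨hk, ⟨s, rfl⟩⟩ := hk
    simp only [Finset.mem_filter, Finset.mem_range]
    omega
  · intro s hs
    simp only [Finset.mem_filter, Finset.mem_range] at hs
    omega
  · intro k hk
    simp only [Finset.mem_filter, Finset.mem_Icc] at hk
    obtain ⟨hk, ⟨s, rfl⟩⟩ := hk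
    omega
  · intro s _; rfl

def stA (m : ℕ) (τ y d : ℂ) (j r k : ℕ) : ℂ :=
  (-1 : ℂ) ^ (j + 1) *
    qpow τ (((m : ℂ) + 1) * ((j : ℂ) + 1) ^ 2 -
      (2 * (m : ℂ) * ((j : ℂ) + 1 - (r : ℂ)) + (k : ℂ)) ^ 2 / (4 * (m : ℂ))) *
    (Complex.exp (Real.pi * Complex.I * (2 * (m : ℂ) * (r : ℂ) - (k : ℂ)) * y) +
      Complex.exp (-(Real.pi * Complex.I) * (2 * (m : ℂ) * (r : ℂ) - (k : ℂ)) * y)) *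
    (jTheta (k : ℂ) (m : ℂ) τ d - jTheta (-(k : ℂ)) (m : ℂ) τ d)

def stB (m : ℕ) (τ y d : ℂ) (j r k : ℕ) : ℂ :=
  (-1 : ℂ) ^ (j + 1) *
    qpow τ (((m : ℂ) + 1) * ((j : ℂ) + 1) ^ 2 -
      (2 * (m : ℂ) * ((j : ℂ) + 1 - (r : ℂ)) - (k : ℂ)) ^ 2 / (4 * (m : ℂ))) *
    (Complex.exp (Real.pi * Complex.I * (2 * (m : ℂ) * (r : ℂ) + (k : ℂ)) * y) +
      Complex.exp (-(Real.pi * Complex.I) * (2 * (m : ℂ) * (r : ℂ) + (k : ℂ)) * y)) *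
    (jTheta (k : ℂ) (m : ℂ) τ d - jTheta (-(k : ℂ)) (m : ℂ) τ d)

lemma EE_B {m : ℕ} (hm : 0 < m) (τ y d : ℂ) (N r s : ℕ) :
    EE m τ y (m*r+s) N * TT m τ d (2*((m*r+s : ℕ):ℂ)+1) = -stB m τ y d N r (2*s+1) := by
  have hm' : (m:ℂ) ≠ 0 := by exact_mod_cast hm.ne'
  have hK : 2*((m*r+s : ℕ):ℂ)+1 = 2 * m * r + ((2*s+1 : ℕ) : ℂ) := by push_cast; ring
  rw [EE_eq m τ y _ N hK, hK]
  generalize ((2*s+1 : ℕ)) = k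
  have h := TT_shift hm τ d k (r:ℤ)
  have e : (2 * (m:ℂ) * r + k) = k + 2 * m * ((r:ℤ):ℂ) := by push_cast; ring
  rw [e, h, ← e, TT, stB]
  have e2' : ((N:ℂ)+1)^2 + (2*m*r+k)*((N:ℂ)+1) - (2*m*r+k)^2/(4*m) =
    ((m : ℂ) + 1) * ((N : ℂ) + 1) ^ 2 -
      (2 * (m : ℂ) * ((N : ℂ) + 1 - (r : ℂ)) - (k : ℂ)) ^ 2 / (4 * (m : ℂ)) := by
    field_simp; ring
  rw [e2']; ring

lemma EE_A {m : ℕ} (hm : 0 < m) (τ y d : ℂ) (N r s : ℕ) (hs : s < m) :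
    EE m τ y (m*r+s) N * TT m τ d (2*((m*r+s : ℕ):ℂ)+1) = stA m τ y d N (r+1) (2*m-(2*s+1)) := by
  have hm' : (m:ℂ) ≠ 0 := by exact_mod_cast hm.ne'
  have hK : 2*((m*r+s : ℕ):ℂ)+1 = 2 * m * ((r+1:ℕ):ℂ) - ((2*m-(2*s+1) : ℕ) : ℂ) := by
    rw [Nat.cast_sub (by omega)]; push_cast; ring
  rw [EE_eq m τ y _ N hK, hK]
  generalize ((2*m-(2*s+1) : ℕ)) = k
  generalize r+1 = r'
  have h := TT_shift hm τ d (-k) (r':ℤ)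
  have e : (2 * (m:ℂ) * r' - k) = -k + 2 * m * ((r':ℤ):ℂ) := by push_cast; ring
  rw [e, h, ← e, TT_neg, TT, stA]
  have e2' : ((N:ℂ)+1)^2 + (2*m*r'-k)*((N:ℂ)+1) - (2*m*r'-k)^2/(4*m) =
    ((m : ℂ) + 1) * ((N : ℂ) + 1) ^ 2 -
      (2 * (m : ℂ) * ((N : ℂ) + 1 - (r' : ℂ)) + (k : ℂ)) ^ 2 / (4 * (m : ℂ)) := by
    field_simp; ring
  rw [e2']; ring

def tA (m : ℕ) (τ d : ℂ) (i : ℕ) : ℂ := if m < 2*(i % m)+1 then TT m τ d (2*i+1) else 0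
def tB (m : ℕ) (τ d : ℂ) (i : ℕ) : ℂ := if 2*(i % m)+1 < m then TT m τ d (2*i+1) else 0

lemma t_split {m : ℕ} (hm : 0 < m) (τ d : ℂ) (i : ℕ) :
    TT m τ d (2*i+1) = tA m τ d i + tB m τ d i := by
  rw [tA, tB]
  rcases lt_trichotomy m (2*(i%m)+1) with h | h | h
  · rw [if_pos h, if_neg (by omega), add_zero]
  · rw [if_neg (by omega), if_neg (by omega), add_zero, ← TT_mid hm τ d,
      ← TT_shift hm τ d m ((i / m : ℕ) : ℤ)]
    have h1 := Nat.mod_add_div i m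
    generalize i / m = r at *
    generalize i % m = s at *
    congr 1
    have h2 : (m:ℂ) = 2*s+1 := by exact_mod_cast h
    rw [← h1]; push_cast; linear_combination -h2
  · rw [if_neg (by omega), if_pos h, zero_add]

lemma sum_B {m : ℕ} (hm : 0 < m) (τ y d : ℂ) (N : ℕ) :
    ∑ i ∈ Finset.range (m * (N+1)), EE m τ y i N * tB m τ d i =
      -∑ r ∈ Finset.range (N+1), ∑ k ∈ (Finset.Icc 1 (m - 1)).filter (fun k => Odd k),
        stB m τ y d N r k := by
  rw [sum_range_mul, ← Finset.sum_neg_distrib]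
  refine Finset.sum_congr rfl fun r _ => ?_
  rw [← sum_low m, ← Finset.sum_neg_distrib]
  refine Finset.sum_congr rfl fun s hs => ?_
  rw [Finset.mem_range] at hs
  rw [tB, Nat.mul_add_mod, Nat.mod_eq_of_lt hs]
  by_cases h : 2*s+1 < m
  · rw [if_pos h, if_pos h, EE_B hm]
  · rw [if_neg h, if_neg h, mul_zero, neg_zero]

lemma sum_A {m : ℕ} (hm : 0 < m) (τ y d : ℂ) (N : ℕ) :
    ∑ i ∈ Finset.range (m * (N+1)), EE m τ y i N * tA m τ d i =
      ∑ r ∈ Finset.Icc 1 (N+1), ∑ k ∈ (Finset.Icc 1 (m - 1)).filter (fun k => Odd k),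
        stA m τ y d N r k := by
  rw [sum_range_mul]
  refine Finset.sum_nbij' (fun r => r+1) (fun r => r-1) ?_ ?_ ?_ ?_ ?_
  · intro r hr; rw [Finset.mem_range] at hr; rw [Finset.mem_Icc]; omega
  · intro r hr; rw [Finset.mem_Icc] at hr; rw [Finset.mem_range]; omega
  · intro r _; omega
  · intro r hr; rw [Finset.mem_Icc] at hr; omega
  intro r _
  rw [← sum_high m]
  refine Finset.sum_congr rfl fun s hs => ?_
  rw [Finset.mem_range] at hs
  rw [tA, Nat.mul_add_mod, Nat.mod_eq_of_lt hs]
  by_cases h : m < 2*s+1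
  · rw [if_pos h, if_pos h, EE_A hm _ _ _ _ _ _ hs]
  · rw [if_neg h, if_neg h, mul_zero]

lemma diff_eq {m : ℕ} (hm : 0 < m) {τ : ℂ} (hτ : 0 < τ.im) {y d : ℂ}
    (hX : ∀ j : ℤ, e2 (y+d+2*j*τ) ≠ 1) (hX2 : ∀ j : ℤ, e2 (y+(-d)+2*j*τ) ≠ 1) :
     (((∑' n, At m τ y n) * (∑' n, Ht m τ y d n) -
      (∑' n, Gt τ y d n) * (∑' n, Bt m τ y d n)) -
      ((∑' n, At m τ y n) * (∑' n, Ht m τ y (-d) n) -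
      (∑' n, Gt τ y (-d) n) * (∑' n, Bt m τ y (-d) n))) =
    (∑' j : ℕ, ∑ r ∈ Finset.Icc 1 (j+1), ∑ k ∈ (Finset.Icc 1 (m - 1)).filter (fun k => Odd k),
        stA m τ y d j r k) -
    (∑' j : ℕ, ∑ r ∈ Finset.range (j+1), ∑ k ∈ (Finset.Icc 1 (m - 1)).filter (fun k => Odd k),
        stB m τ y d j r k) := by
  obtain ⟨C, hC⟩ := TT_bdd hm τ d
  have hA : ∀ i, ‖tA m τ d i‖ ≤ C := fun i => (norm_ite_le _ _).trans (hC i)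
  have hB : ∀ i, ‖tB m τ d i‖ ≤ C := fun i => (norm_ite_le _ _).trans (hC i)
  have dT := double hm hτ y hC
  rw [(diff_sum hm hτ hX hX2).tsum_eq] at dT
  have dA := (double hm hτ y hA).summable
  have dB := (double hm hτ y hB).summable
  rw [← dT.tsum_eq]
  have e : ∀ N : ℕ, ∑ i ∈ Finset.range (m * (N+1)), EE m τ y i N * TT m τ d (2*i+1) =
      ∑ i ∈ Finset.range (m * (N+1)), EE m τ y i N * tA m τ d i +
      ∑ i ∈ Finset.range (m * (N+1)), EE m τ y i N * tB m τ d i := fun N => by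
    rw [← Finset.sum_add_distrib]
    refine Finset.sum_congr rfl fun i _ => ?_
    rw [t_split hm]; ring
  rw [tsum_congr e, dA.tsum_add dB, tsum_congr (sum_A hm τ y d), tsum_congr (sum_B hm τ y d),
    tsum_neg, sub_eq_add_neg]

lemma PP_eq {m : ℕ} (hm : 0 < m) {τ : ℂ} (hτ : 0 < τ.im) {z : ℂ} (y d : ℂ) (hz : y + d = 2*z)
    (h1 : ¬ InLattice τ z) (h2 : ¬ InLattice τ (z + 1/2)) :
    (∑' j : ℤ, e2 (m*j*d + m*j^2*τ) / (1 - e2 (z + j*τ))) -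
      (∑' j : ℤ, e2 (m*j*d + m*j^2*τ) / (1 - e2 (z + 1/2 + j*τ))) = 2 * ∑' j, Ht m τ y d j := by
  have h0 : Summable fun n : ℤ => ‖e2 (m*n*d + m*n^2*τ)‖ := by
    refine (summable_e2_quad 0 (m*d) (m*τ) ?_).congr fun n => ?_
    · simp; positivity
    · congr 2; ring
  rw [← (summable_div_bdd hτ z h0).of_norm.tsum_sub (summable_div_bdd hτ (z+1/2) h0).of_norm,
    ← tsum_mul_left]
  refine tsum_congr fun j => ?_
  have a1 := not_lattice h1 j
  have a2 := not_lattice h2 j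
  rw [e2_zpow, ← e2_add] at a1 a2
  have e1 : e2 (z + 1/2 + j*τ) = -e2 (z + j*τ) := by
    rw [show z + 1/2 + j*τ = (z + j*τ) + 1/2 by ring, e2_add, e2_half]; ring
  have e3 : e2 (y + d + 2*j*τ) = e2 (z + j*τ)^2 := by
    rw [e2_pow, hz]; congr 1; push_cast; ring
  have e4 : e2 (m*j*d + m*j^2*τ + (y+d)/2 + j*τ) = e2 (m*j*d + m*j^2*τ) * e2 (z + j*τ) := by
    rw [← e2_add, hz]; congr 1; ring
  rw [Ht, e1, e3, e4]
  rw [e1] at a2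
  generalize e2 (z + j*τ) = x at *
  have b1 : 1 - x ≠ 0 := sub_ne_zero.2 (Ne.symm a1)
  have b2 : 1 - -x ≠ 0 := sub_ne_zero.2 (Ne.symm a2)
  have b3 : 1 - x^2 ≠ 0 := by
    rw [show 1 - x^2 = (1-x)*(1- -x) by ring]; exact mul_ne_zero b1 b2
  rw [show 1 - x^2 = (1-x)*(1- -x) by ring]
  field_simp
  ring

lemma Phi1_eq (m : ℕ) (τ z w d : ℂ) (hd : z + w = d) : Phi1 m 0 τ z w 0 =
    ∑' j : ℤ, e2 (m*j*d + m*j^2*τ) / (1 - e2 (z + j*τ)) := by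
  rw [Phi1, mul_zero, Complex.exp_zero, one_mul]
  refine tsum_congr fun j => ?_
  rw [qpow_eq, qpow_eq, ← e2, ← e2_add, ← e2_add, hd]
  congr 2
  · congr 1 <;> ring
  · congr 2; ring

lemma Phi2_eq (m : ℕ) (τ z w u d : ℂ) (hd : z + w = -d) (hw : -w = u) : Phi2 m 0 τ z w 0 =
    ∑' j : ℤ, e2 (m*j*d + m*j^2*τ) / (1 - e2 (u + j*τ)) := by
  rw [Phi2, mul_zero, Complex.exp_zero, one_mul]
  refine tsum_congr fun j => ?_
  have : Complex.exp (-(2 * Real.pi * Complex.I) * (m * (j : ℂ) * (z + w) + 0 * w)) =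
    e2 (m*j*d) := by rw [e2, hd]; congr 1; ring
  rw [this, hw, qpow_eq, qpow_eq, ← e2_add, ← e2_add]
  congr 2
  · congr 1; ring
  · congr 2; ring

lemma sum_Gt {τ : ℂ} (hτ : 0 < τ.im) {z : ℂ} (y d : ℂ) (hz : y + d = 2*z)
    (h1 : ¬ InLattice τ z) (h2 : ¬ InLattice τ (z + 1/2)) :
    ∑' j, Gt τ y d j =
      -I * eta τ ^ 2 * eta (2 * τ) ^ 2 / (mumford 1 1 τ z * mumford 1 0 τ z) := by
  rw [← G_eq hτ h1 h2]
  refine tsum_congr fun j => ?_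
  rw [Gt, hz]; congr 3; ring

lemma sum_At (m : ℕ) (τ y : ℂ) :
    jTheta 0 ((m:ℂ)+1) τ ((-(1/2) + m*y)/((m:ℂ)+1)) = ∑' n, At m τ y n := by
  have hm : (m:ℂ)+1 ≠ 0 := by exact_mod_cast Nat.succ_ne_zero m
  rw [jTheta_eq]
  refine tsum_congr fun j => ?_
  rw [At]; apply e2_congr (-j); push_cast; field_simp; ring

lemma sum_Bt (m : ℕ) (τ y d x : ℂ) (hx : x = (1/2 + y)/((m:ℂ)+1) + d) :
    jTheta 0 ((m:ℂ)+1) τ x = ∑' n, Bt m τ y d n := by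
  have hm : (m:ℂ)+1 ≠ 0 := by exact_mod_cast Nat.succ_ne_zero m
  rw [jTheta_eq, hx]
  refine tsum_congr fun j => ?_
  rw [Bt]; congr 1; field_simp; ring

lemma nl {τ z y d : ℂ} (hz : y + d = 2*z) (h1 : ¬ InLattice τ z) (h2 : ¬ InLattice τ (z + 1/2))
    (j : ℤ) : e2 (y+d+2*j*τ) ≠ 1 := by
  have := not_lattice2 h1 h2 j
  rw [e2_zpow, ← e2_add] at this
  rwa [hz, show 2*z + 2*j*τ = 2*z + j*(2*τ) by ring]

theorem final_form (m : ℕ) (hm : 0 < m)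
    (τ : ℂ) (hτ : 0 < τ.im) (z1 z3 : ℂ)
    (h1 : ¬ InLattice τ z1) (h2 : ¬ InLattice τ (z1 + 1 / 2))
    (h3 : ¬ InLattice τ z3) (h4 : ¬ InLattice τ (z3 + 1 / 2)) :
    jTheta 0 ((m : ℂ) + 1) τ ((-(1 / 2) + (m : ℂ) * (z1 + z3)) / ((m : ℂ) + 1)) *
        (Phi (m : ℂ) 0 τ z1 (-z3) 0 -
          Phi (m : ℂ) 0 τ (z1 + 1 / 2) (-z3 - 1 / 2) 0) =
      2 * Complex.I * eta τ ^ 2 * eta (2 * τ) ^ 2 *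
          (-(jTheta 0 ((m : ℂ) + 1) τ ((1 / 2 + z1 + z3) / ((m : ℂ) + 1) + z1 - z3) /
              (mumford 1 1 τ z1 * mumford 1 0 τ z1)) +
            jTheta 0 ((m : ℂ) + 1) τ ((1 / 2 + z1 + z3) / ((m : ℂ) + 1) - z1 + z3) /
              (mumford 1 1 τ z3 * mumford 1 0 τ z3)) +
        2 * (∑' j : ℕ, ∑ r ∈ Finset.Icc 1 (j + 1),
          ∑ k ∈ (Finset.Icc 1 (m - 1)).filter (fun k => Odd k),
            stA m τ (z1 + z3) (z1 - z3) j r k) -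
        2 * (∑' j : ℕ, ∑ r ∈ Finset.range (j + 1),
          ∑ k ∈ (Finset.Icc 1 (m - 1)).filter (fun k => Odd k),
            stB m τ (z1 + z3) (z1 - z3) j r k) := by
  have y1 : (z1 + z3) + (z1 - z3) = 2 * z1 := by ring
  have y3 : (z1 + z3) + -(z1 - z3) = 2 * z3 := by ring
  have D := diff_eq hm hτ (nl y1 h1 h2) (nl y3 h3 h4)
  rw [sum_At, sum_Bt m τ (z1+z3) (z1-z3) ((1 / 2 + z1 + z3) / ((m : ℂ) + 1) + z1 - z3) (by ring),
    sum_Bt m τ (z1+z3) (-(z1-z3)) ((1 / 2 + z1 + z3) / ((m : ℂ) + 1) - z1 + z3) (by ring),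
    Phi, Phi, Phi1_eq m τ z1 (-z3) (z1 - z3) (by ring),
    Phi1_eq m τ (z1 + 1/2) (-z3 - 1/2) (z1 - z3) (by ring),
    Phi2_eq m τ z1 (-z3) z3 (-(z1 - z3)) (by ring) (by ring),
    Phi2_eq m τ (z1 + 1/2) (-z3 - 1/2) (z3 + 1/2) (-(z1 - z3)) (by ring) (by ring)]
  have P1 := PP_eq hm hτ _ _ y1 h1 h2
  have P3 := PP_eq hm hτ _ _ y3 h3 h4
  have G1 := sum_Gt hτ _ _ y1 h1 h2
  have G3 := sum_Gt hτ _ _ y3 h3 h4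
  rw [G1, G3] at D
  linear_combination 2 * D + (∑' n, At m τ (z1+z3) n) * (P1 - P3)

theorem statement12 (m : ℕ) (hm : 0 < m)
    (τ : ℂ) (hτ : 0 < τ.im) (z1 z3 : ℂ)
    (h1 : ¬ InLattice τ z1) (h2 : ¬ InLattice τ (z1 + 1 / 2))
    (h3 : ¬ InLattice τ z3) (h4 : ¬ InLattice τ (z3 + 1 / 2)) :
    jTheta 0 ((m : ℂ) + 1) τ ((-(1 / 2) + (m : ℂ) * (z1 + z3)) / ((m : ℂ) + 1)) *
        (Phi (m : ℂ) 0 τ z1 (-z3) 0 -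
          Phi (m : ℂ) 0 τ (z1 + 1 / 2) (-z3 - 1 / 2) 0) =
      2 * Complex.I * eta τ ^ 2 * eta (2 * τ) ^ 2 *
          (-(jTheta 0 ((m : ℂ) + 1) τ ((1 / 2 + z1 + z3) / ((m : ℂ) + 1) + z1 - z3) /
              (mumford 1 1 τ z1 * mumford 1 0 τ z1)) +
            jTheta 0 ((m : ℂ) + 1) τ ((1 / 2 + z1 + z3) / ((m : ℂ) + 1) - z1 + z3) /
              (mumford 1 1 τ z3 * mumford 1 0 τ z3)) +
        2 * (∑' j : ℕ, ∑ r ∈ Finset.Icc 1 (j + 1),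
          ∑ k ∈ (Finset.Icc 1 (m - 1)).filter (fun k => Odd k),
            (-1 : ℂ) ^ (j + 1) *
              qpow τ (((m : ℂ) + 1) * ((j : ℂ) + 1) ^ 2 -
                (2 * (m : ℂ) * ((j : ℂ) + 1 - (r : ℂ)) + (k : ℂ)) ^ 2 / (4 * (m : ℂ))) *
              (Complex.exp (Real.pi * Complex.I *
                  (2 * (m : ℂ) * (r : ℂ) - (k : ℂ)) * (z1 + z3)) +
                Complex.exp (-(Real.pi * Complex.I) *
                  (2 * (m : ℂ) * (r : ℂ) - (k : ℂ)) * (z1 + z3))) *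
              (jTheta (k : ℂ) (m : ℂ) τ (z1 - z3) -
                jTheta (-(k : ℂ)) (m : ℂ) τ (z1 - z3))) -
        2 * (∑' j : ℕ, ∑ r ∈ Finset.range (j + 1),
          ∑ k ∈ (Finset.Icc 1 (m - 1)).filter (fun k => Odd k),
            (-1 : ℂ) ^ (j + 1) *
              qpow τ (((m : ℂ) + 1) * ((j : ℂ) + 1) ^ 2 -
                (2 * (m : ℂ) * ((j : ℂ) + 1 - (r : ℂ)) - (k : ℂ)) ^ 2 / (4 * (m : ℂ))) *
              (Complex.exp (Real.pi * Complex.I *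
                  (2 * (m : ℂ) * (r : ℂ) + (k : ℂ)) * (z1 + z3)) +
                Complex.exp (-(Real.pi * Complex.I) *
                  (2 * (m : ℂ) * (r : ℂ) + (k : ℂ)) * (z1 + z3))) *
              (jTheta (k : ℂ) (m : ℂ) τ (z1 - z3) -
                jTheta (-(k : ℂ)) (m : ℂ) τ (z1 - z3))) := by
  exact final_form m hm τ hτ z1 z3 h1 h2 h3 h4

end Wakimoto
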